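/- Let E be a 1-rooted embanked state for which there exists m ∈ [0, 2^{2k} − 2) with ν_2(m) odd and h(N^{−1}(E)) = (2^{2k} − m − 1, 2^{2k} + m). Let m′ be the smallest element of [0, 2^{2k} − 2] with m′ > m and ν_2(m′) odd, and set d = m′ − m. Then there exists a unique 1-rooted embanked state E′ with E ↦ E′ and h(N^{−1}(E′)) = (2^{2k} − m′ − 1, 2^{2k} + m′); moreover a_i(E′) = a_i(E) + 2d for i ∈ {0,1}. -/

import Mathlib

/-!
On a state whose entries `a_j` (`j ≥ 1`) have the parities of the Gray code digits of `n`, an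
Increment rule changes `n` by `±1`, and `n ↦ n ± 1` changes exactly one of the numbers `⟨n/2^j⟩`,
`j ≥ 1`. So on a stretch of Increment rules the state is explicit: `a_j` is a constant minus or
plus `⟨n/2^j⟩` (`Dn`, `Up`). Take an empty state of length `2k+2` with `a_0 = 2x` and
`a_1 = 2^{2k} + 2y`. The Zero rule sets `n = 2^{2k+1} - 1`; then `n` falls, halves to
`h_1 = 2^{2k} - 1 - x`, rises, halves to `h_2 = 2^{2k} + y` and falls to `0`. This yields the next
empty state in closed form (`Pre.N_eq`).

The closed form depends on `h_1`, `h_2` and, with a shift of index by two, on the old entries.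
Hence if `N(E) = E[i]` with `i ≥ 2`, then `E[i]` has the same `h`, and `N` raises its entry
`a_{i-2}`; so `N'` follows the indices `i, i-2, …` down to `0` or `1`. When `a_0` or `a_1` is
raised, `x` or `y` grows by `1`, and by `nearest_sub_one` the next index is the valuation
`ν₂(2^{2k} - x)` or `ν₂(2^{2k} + y) + 1` at the new `x` or `y` (`W.step_x`, `W.step_y`). The pair
`(x, y)` thus performs a walk decided by parities of valuations. It starts at `(0, 0)` for `S_k`
and passes through `(m, m)` for each `m > 0` of odd valuation: between two consecutive such numbers
it first raises `y` all the way, then `x` (`Walk`). It stops at `(2^{2k} - 2, 2^{2k})`, where an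
Overflow occurs (`W.last`).

A `1`-rooted embanked state with `h(N⁻¹(E)) = (2^{2k} - m - 1, 2^{2k} + m)` therefore sits at
`(m, m + 1)`, which is step `2m + 1` of the walk (`identify`), and for `m` of odd valuation the step
leaving `(m, m)` does produce one (`exists_at`). Uniqueness, reachability and the values of `a_0`
and `a_1` follow.
-/

open scoped Classical

namespace Skelet17

/-- The five kinds of transition rules. -/
inductive Rule
  | overflow | halt | zero | halve | increment
  deriving DecidableEq

/-- A state `(a_ℓ, …, a_1, a_0)` (written left to right, `a_0` rightmost) is stored
as the list `[a_0, a_1, …, a_ℓ]`, i.e. with the *rightmost* entry first. -/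
abbrev State := List ℤ

/-- The leftmost entry `a_ℓ` of a state. -/
def leftmost (S : State) : ℤ := S.getLastD 0

/-- The entry `a_i(S)`. -/
def entry (S : State) (i : ℕ) : ℤ := S.getD i 0

/-- `ℓ(S) = |S| - 1`. -/
def ell (S : State) : ℕ := S.length - 1

/-- The Overflow rule applies: the leftmost entry is odd and all other entries are even. -/
def OverflowCond (S : State) : Prop := Odd (leftmost S) ∧ ∀ x ∈ S.dropLast, Even x

/-- The Halt rule applies: all entries are even and the two leftmost entries are `0`. -/
def HaltCond (S : State) : Prop :=
  (∀ x ∈ S, Even x) ∧ S.getLastD 1 = 0 ∧ S.dropLast.getLastD 1 = 0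

/-- The Zero rule applies: all entries are even and the Halt rule does not apply. -/
def ZeroCond (S : State) : Prop := (∀ x ∈ S, Even x) ∧ ¬ HaltCond S

/-- The Halve rule applies: `a_0 = -1` and none of the earlier rules applies. -/
def HalveCond (S : State) : Prop :=
  ¬ OverflowCond S ∧ ¬ HaltCond S ∧ ¬ ZeroCond S ∧ S.headD 0 = -1

/-- The rule applied to a state (the first matching rule). -/
noncomputable def ruleOf (S : State) : Rule :=
  if OverflowCond S then .overflow
  else if HaltCond S then .halt
  else if ZeroCond S then .zero
  else if S.headD 0 = -1 then .halve
  else .increment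

/-- The transition function `P`.  (On a Halt state the process stops; we set `P S = S` there.)
Recall the list stores `a_0` first, so e.g. the Overflow rule
`(2a_ℓ+1, 2a_{ℓ-1}, …, 2a_0) ↦ (0, 2a_ℓ+2, 2a_{ℓ-1}, …, 2a_0)` appends a `0` at the end of
the list and adds `1` to the previously last element. -/
noncomputable def P (S : State) : State :=
  match ruleOf S with
  | .overflow => S.dropLast ++ [leftmost S + 1, 0]
  | .halt => S
  | .zero => (S.set 0 (S.headD 0 - 1)).set (S.length - 1) (leftmost S + 1) ++ [0, 0]
  | .halve => S.tail
  | .increment =>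
      let i := S.findIdx (fun x => x % 2 != 0)   -- index of the rightmost odd entry
      (S.set (i + 1) (S.getD (i + 1) 0 + 1)).set 0 (S.headD 0 - 1)

/-- `S ↦ T` : some iterate of `P` sends `S` to `T`. -/
def Reaches (S T : State) : Prop := ∃ m : ℕ, P^[m] S = T

/-- `σ(S) = +1` if the sum of the entries is odd, `-1` if it is even. -/
noncomputable def sigma (S : State) : ℤ := if Odd S.sum then 1 else -1

/-- `n(S)`: the natural number whose Gray code digits (least significant first) are
`a_1 mod 2, a_2 mod 2, …, a_ℓ mod 2`.  Equivalently (standard Gray-code decoding),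
bit `i` of `n(S)` is the parity of `a_{i+1} + ⋯ + a_ℓ`. -/
def nOf (S : State) : ℕ :=
  ∑ i ∈ Finset.range (ell S),
    2 ^ i * ((∑ j ∈ Finset.Icc (i + 1) (ell S), entry S j) % 2).toNat

/-- `⟨a / 2^j⟩` : the nearest integer to `a / 2^j`, rounding half-integers up. -/
def nearest (j a : ℕ) : ℕ := (2 * a + 2 ^ j) / 2 ^ (j + 1)

/-- `d_j(a, b) = |⟨a/2^j⟩ - ⟨b/2^j⟩|`. -/
def dd (j a b : ℕ) : ℕ := Nat.dist (nearest j a) (nearest j b)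

/-- `S_k = (0, 2, 2^2, …, 2^{2k}, 0)`. -/
def Sk (k : ℕ) : State :=
  0 :: (((List.range (2 * k)).map fun i => (2 : ℤ) ^ (2 * k - i)) ++ [0])

/-- An empty state: `n(E) = 0`, `σ(E) = -1`, and the next rule applied is not Halt. -/
def IsEmptyState (E : State) : Prop :=
  E ≠ [] ∧ nOf E = 0 ∧ sigma E = -1 ∧ ruleOf E ≠ Rule.halt

/-- `m` is the first positive time at which the trajectory of `E` is at an empty state. -/
def NextEmptyAt (E : State) (m : ℕ) : Prop :=
  0 < m ∧ IsEmptyState (P^[m] E) ∧ ∀ t, 0 < t → t < m → ¬ IsEmptyState (P^[t] E)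

/-- `N(E)` : the next empty state after `E` (junk value `[]` if it does not exist). -/
noncomputable def N (E : State) : State :=
  if h : ∃ m, NextEmptyAt E m then P^[h.choose] E else []

/-- The rule applied at time `j` belongs to `T_E`, the sequence of rules from `E` to the
next empty state after `E` (all rules after `E` when no next empty state exists). -/
def InTE (E : State) (j : ℕ) : Prop := ∀ t, 0 < t → t ≤ j → ¬ IsEmptyState (P^[t] E)

/-- Weakly embanked: `T_E` consists of one Zero rule at the start and contains at least two
Halve rules, and all other rules before the second Halve rule are Increment rules. -/
def WeaklyEmbanked (E : State) : Prop :=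
  IsEmptyState E ∧
  ∃ j₁ j₂, 0 < j₁ ∧ j₁ < j₂ ∧ InTE E j₂ ∧
    ruleOf (P^[j₁] E) = Rule.halve ∧ ruleOf (P^[j₂] E) = Rule.halve ∧
    ∀ t, 0 < t → t < j₂ → t ≠ j₁ → ruleOf (P^[t] E) = Rule.increment

/-- Embanked: the next empty state `N(E)` exists and the non-Increment rules of `T_E` consist
of exactly one Zero rule at the start and exactly two Halve rules elsewhere. -/
def Embanked (E : State) : Prop :=
  IsEmptyState E ∧
  ∃ m j₁ j₂, NextEmptyAt E m ∧ 0 < j₁ ∧ j₁ < j₂ ∧ j₂ < m ∧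
    ruleOf (P^[j₁] E) = Rule.halve ∧ ruleOf (P^[j₂] E) = Rule.halve ∧
    ∀ t, 0 < t → t < m → t ≠ j₁ → t ≠ j₂ → ruleOf (P^[t] E) = Rule.increment

/-- `h_i(E)` (`i ∈ {1,2}`): the value of `n` at the state immediately *after* the `i`-th
Halve rule applied after `E`. -/
noncomputable def hVal (E : State) (i : ℕ) : ℕ :=
  nOf (P^[Nat.nth (fun j => ruleOf (P^[j] E) = Rule.halve) (i - 1) + 1] E)

/-- `s_i(E)` (`i ∈ {1,2}`): the value of `n` at the state immediately *before* the `i`-th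
Halve rule applied after `E`. -/
noncomputable def sVal (E : State) (i : ℕ) : ℕ :=
  nOf (P^[Nat.nth (fun j => ruleOf (P^[j] E) = Rule.halve) (i - 1)] E)

/-- `E[i]` : the state `E` with the entry `a_i` replaced by `a_i + 2`. -/
def bump (E : State) (i : ℕ) : State := E.set i (E.getD i 0 + 2)

/-- `N'(E) = N^{⌈(i+1)/2⌉}(E)` for an embanked state `E` with `N(E) = E[i]`
(junk value `E` if no such `i` exists). -/
noncomputable def N' (E : State) : State :=
  if h : ∃ i, i < E.length ∧ N E = bump E i then N^[(h.choose + 2) / 2] E else E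

/-- A rooted embanked state: an embanked state obtained from `S_k` by applying `N'`
some number of times. -/
def RootedEmbanked (k : ℕ) (E : State) : Prop :=
  Embanked E ∧ ∃ e : ℕ, N'^[e] (Sk k) = E

/-- `κ_{E→E'}(j)` : the number of steps `S ↦ N(S)` with `N(S) = S[j]` along the chain
`E, N(E), N²(E), …, N^[t](E) = E'`. -/
noncomputable def kappa (E : State) (t j : ℕ) : ℕ :=
  ((Finset.range t).filter fun s => N (N^[s] E) = bump (N^[s] E) j).card

/-! ### States given by functions -/

/-- The state of length `L` with entries `a_j = a j`. Entries are given by a function on all of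
`ℕ`, so that shifting and changing single entries need no bounds. -/
def st (L : ℕ) (a : ℕ → ℤ) : State := (List.range L).map a

@[simp] lemma st_length (L : ℕ) (a : ℕ → ℤ) : (st L a).length = L := by simp [st]

lemma st_congr {L : ℕ} {a b : ℕ → ℤ} (h : ∀ j < L, a j = b j) : st L a = st L b := by
  unfold st
  apply List.map_congr_left
  intro j hj
  exact h j (List.mem_range.1 hj)

lemma st_getD {L : ℕ} {a : ℕ → ℤ} {j : ℕ} (h : j < L) (d : ℤ) : (st L a).getD j d = a j := by
  simp [st, List.getD, h]

lemma entry_st {L : ℕ} {a : ℕ → ℤ} {j : ℕ} (h : j < L) : entry (st L a) j = a j := st_getD h 0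

lemma eq_st {S : State} {L : ℕ} {a : ℕ → ℤ} (hL : S.length = L)
    (h : ∀ j < L, S.getD j 0 = a j) : S = st L a := by
  apply List.ext_getElem
  · simp [hL]
  · intro j h1 h2
    have := h j (hL ▸ h1)
    rw [List.getD_eq_getElem _ _ h1] at this
    simp [st, this]

lemma mem_st {L : ℕ} {a : ℕ → ℤ} {p : ℤ → Prop} : (∀ x ∈ st L a, p x) ↔ ∀ j < L, p (a j) := by
  simp [st]

lemma st_succ (L : ℕ) (a : ℕ → ℤ) : st (L + 1) a = st L a ++ [a L] := by
  simp [st, List.range_succ]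

lemma st_cons (L : ℕ) (a : ℕ → ℤ) : st (L + 1) a = a 0 :: st L (fun j => a (j + 1)) := by
  simp [st, List.range_succ_eq_map, Function.comp_def]

lemma st_dropLast (L : ℕ) (a : ℕ → ℤ) : (st (L + 1) a).dropLast = st L a := by
  simp [st_succ]

lemma st_getLastD (L : ℕ) (a : ℕ → ℤ) (d : ℤ) : (st (L + 1) a).getLastD d = a L := by
  simp [st_succ]

lemma st_headD (L : ℕ) (a : ℕ → ℤ) (d : ℤ) : (st (L + 1) a).headD d = a 0 := by
  simp [st_cons]

lemma st_sum (L : ℕ) (a : ℕ → ℤ) : (st L a).sum = ∑ j ∈ Finset.range L, a j := by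
  induction L with
  | zero => simp [st]
  | succ L ih => rw [st_succ, Finset.sum_range_succ, ← ih]; simp

lemma bump_st {L i : ℕ} (h : i < L) (a : ℕ → ℤ) :
    bump (st L a) i = st L (fun j => a j + if j = i then 2 else 0) := by
  apply eq_st
  · simp [bump]
  · intro j hj
    rw [bump, st_getD h, List.getD_eq_getElem _ _ (by simpa using hj), List.getElem_set]
    split_ifs with h1 h2 h2
    · rw [h1]
    · omega
    · omega
    · simp [st]

lemma of_bump_st {F : State} {L i : ℕ} (h : i < L) {a : ℕ → ℤ} (hF : bump F i = st L a) :
    F = st L (fun j => a j - if j = i then 2 else 0) := by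
  have hl : F.length = L := by simpa [bump] using congrArg List.length hF
  apply eq_st hl
  intro j hj
  have h1 := congrArg (fun S => List.getD S j 0) hF
  simp only [st_getD hj] at h1
  rw [← h1, bump, List.getD_eq_getElem (l := F) (hn := by omega),
    List.getD_eq_getElem (hn := by simpa using (by omega : j < F.length)), List.getElem_set]
  split_ifs with h2 h3 h3
  · subst h2; rw [List.getD_eq_getElem (hn := by omega)]; ring
  · omega
  · omega
  · ring

/-! ### The transition rules on `st` -/

lemma not_overflow {l i : ℕ} {a : ℕ → ℤ} (hi : i < l) (ho : Odd (a i)) :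
    ¬ OverflowCond (st (l + 1) a) := by
  rintro ⟨-, h⟩
  rw [st_dropLast, mem_st] at h
  exact Int.not_even_iff_odd.2 ho (h i hi)

lemma not_allEven {L i : ℕ} {a : ℕ → ℤ} (hi : i < L) (ho : Odd (a i)) :
    ¬ ∀ x ∈ st L a, Even x := by
  rw [mem_st]
  intro h
  exact Int.not_even_iff_odd.2 ho (h i hi)

/-- The Increment rule applies as soon as some entry other than the leftmost is odd and
`a_0 ≠ -1`. -/
lemma ruleOf_inc {l i : ℕ} {a : ℕ → ℤ} (hi : i < l) (ho : Odd (a i)) (h0 : a 0 ≠ -1) :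
    ruleOf (st (l + 1) a) = Rule.increment := by
  have h1 := not_overflow hi ho
  have h2 := not_allEven (L := l + 1) (by omega) ho
  have h3 : ¬ HaltCond (st (l + 1) a) := fun h => h2 h.1
  have h4 : ¬ ZeroCond (st (l + 1) a) := fun h => h2 h.1
  simp only [ruleOf, if_neg h1, if_neg h3, if_neg h4, st_headD, if_neg h0]

lemma P_inc {l i : ℕ} {a : ℕ → ℤ} (hi : i < l) (he : ∀ j < i, Even (a j)) (ho : Odd (a i))
    (h0 : a 0 ≠ -1) :
    P (st (l + 1) a) = st (l + 1) (fun j => a j + (if j = i + 1 then 1 else 0)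
      - if j = 0 then 1 else 0) := by
  have hidx : (st (l + 1) a).findIdx (fun x => x % 2 != 0) = i := by
    rw [List.findIdx_eq (by simp; omega)]
    refine ⟨?_, ?_⟩
    · have := Int.odd_iff.1 ho
      simp [st, this]
    · intro j hj
      have := Int.even_iff.1 (he j hj)
      simp [st, this]
  simp only [P, ruleOf_inc hi ho h0, hidx, st_headD]
  apply eq_st
  · simp
  · intro j hj
    rw [st_getD (by omega), List.getD_eq_getElem (hn := by simpa using hj), List.getElem_set,
      List.getElem_set]
    rcases Nat.eq_zero_or_pos j with h | h
    · subst h; simp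
    · have : ¬ 0 = j := by omega
      have h' : ¬ j = 0 := by omega
      by_cases hj' : i + 1 = j
      · simp [this, h', hj']
      · have : ¬ j = i + 1 := fun h => hj' h.symm
        simp [*, st]

lemma ruleOf_halve {l : ℕ} {a : ℕ → ℤ} (hl : 0 < l) (h0 : a 0 = -1) :
    ruleOf (st (l + 1) a) = Rule.halve := by
  have ho : Odd (a 0) := by rw [h0]; decide
  have h1 := not_overflow hl ho
  have h2 := not_allEven (L := l + 1) (by omega) ho
  have h3 : ¬ HaltCond (st (l + 1) a) := fun h => h2 h.1
  have h4 : ¬ ZeroCond (st (l + 1) a) := fun h => h2 h.1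
  simp only [ruleOf, if_neg h1, if_neg h3, if_neg h4, st_headD, if_pos h0]

lemma P_halve {l : ℕ} {a : ℕ → ℤ} (hl : 0 < l) (h0 : a 0 = -1) :
    P (st (l + 1) a) = st l (fun j => a (j + 1)) := by
  simp only [P, ruleOf_halve hl h0]
  simp [st_cons]

lemma ruleOf_overflow {l : ℕ} {a : ℕ → ℤ} (he : ∀ j < l, Even (a j)) (ho : Odd (a l)) :
    ruleOf (st (l + 1) a) = Rule.overflow := by
  have : OverflowCond (st (l + 1) a) := by
    refine ⟨?_, ?_⟩
    · rw [leftmost, st_getLastD]; exact ho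
    · rw [st_dropLast, mem_st]; exact he
  simp only [ruleOf, if_pos this]

lemma P_overflow {l : ℕ} {a : ℕ → ℤ} (he : ∀ j < l, Even (a j)) (ho : Odd (a l)) :
    P (st (l + 1) a) = st (l + 2) (fun j => if j < l then a j else if j = l then a l + 1 else 0) := by
  simp only [P, ruleOf_overflow he ho]
  have h : st l a = st l (fun j => if j < l then a j else if j = l then a l + 1 else 0) :=
    st_congr (by intro j hj; rw [if_pos hj])
  rw [st_dropLast, leftmost, st_getLastD, st_succ, st_succ, h]
  simp

lemma not_overflow_of_even {l : ℕ} {a : ℕ → ℤ} (he : ∀ j < l + 1, Even (a j)) :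
    ¬ OverflowCond (st (l + 1) a) := by
  rintro ⟨h, -⟩
  rw [leftmost, st_getLastD] at h
  exact Int.not_even_iff_odd.2 h (he l (by omega))

lemma ruleOf_ne_halt {l : ℕ} {a : ℕ → ℤ} (h : ¬ (a (l + 1) = 0 ∧ a l = 0)) :
    ruleOf (st (l + 2) a) ≠ Rule.halt := by
  have h3 : ¬ HaltCond (st (l + 2) a) := by
    rintro ⟨-, h1, h2⟩
    rw [st_getLastD] at h1
    rw [st_dropLast, st_getLastD] at h2
    exact h ⟨h1, h2⟩
  simp only [ruleOf, if_neg h3]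
  split_ifs <;> simp

lemma ruleOf_zero {l : ℕ} {a : ℕ → ℤ} (he : ∀ j < l + 1, Even (a j))
    (h : ruleOf (st (l + 1) a) ≠ Rule.halt) :
    ruleOf (st (l + 1) a) = Rule.zero := by
  have h1 := not_overflow_of_even he
  have h3 : ¬ HaltCond (st (l + 1) a) := by
    intro h3
    simp [ruleOf, h1, h3] at h
  have h4 : ZeroCond (st (l + 1) a) := ⟨mem_st.2 he, h3⟩
  simp only [ruleOf, if_neg h1, if_neg h3, if_pos h4]

lemma P_zero {l : ℕ} {a : ℕ → ℤ} (hl : 0 < l) (he : ∀ j < l + 1, Even (a j))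
    (h : ruleOf (st (l + 1) a) ≠ Rule.halt) :
    P (st (l + 1) a) = st (l + 3) (fun j => if j = 0 then a 0 - 1 else if j < l then a j else
      if j = l then a l + 1 else 0) := by
  simp only [P, ruleOf_zero he h]
  rw [st_headD, leftmost, st_getLastD, st_succ (l + 2), st_succ (l + 1)]
  have : ((st (l + 1) a).set 0 (a 0 - 1)).set ((st (l + 1) a).length - 1) (a l + 1)
      = st (l + 1) (fun j => if j = 0 then a 0 - 1 else if j < l then a j else
      if j = l then a l + 1 else 0) := by
    apply eq_st
    · simp
    · intro j hj
      rw [List.getD_eq_getElem (hn := by simpa using hj), List.getElem_set, List.getElem_set]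
      rcases Nat.eq_zero_or_pos j with h | h
      · subst h
        have : ¬ l = 0 := by omega
        simp [this]
      · have h1 : ¬ 0 = j := by omega
        have h1' : ¬ j = 0 := by omega
        by_cases h2 : l = j
        · subst h2; simp [h1']
        · have : j < l := by omega
          simp [*, st]
  rw [this]
  simp

/-! ### Nearest integers and Gray codes -/

lemma nearest_zero_left (u : ℕ) : nearest 0 u = u := by
  unfold nearest; omega

lemma nearest_zero_right (j : ℕ) : nearest j 0 = 0 := by
  unfold nearest
  rw [pow_succ]
  apply Nat.div_eq_of_lt
  have : 0 < 2 ^ j := by positivity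
  omega

lemma nearest_succ_two_mul (j h : ℕ) : nearest (j + 1) (2 * h) = nearest j h := by
  unfold nearest
  rw [show 2 * (2 * h) + 2 ^ (j + 1) = 2 * (2 * h + 2 ^ j) by ring, pow_succ 2 (j + 1),
    mul_comm (2 ^ (j + 1)) 2, Nat.mul_div_mul_left _ _ (by norm_num)]

lemma exists_odd_mul {u : ℕ} (hu : 0 < u) : ∃ w, u = 2 ^ padicValNat 2 u * w ∧ w % 2 = 1 := by
  obtain ⟨w, hw⟩ := (pow_padicValNat_dvd : 2 ^ padicValNat 2 u ∣ u)
  refine ⟨w, hw, ?_⟩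
  by_contra h
  obtain ⟨v, rfl⟩ : 2 ∣ w := by omega
  apply pow_succ_padicValNat_not_dvd (p := 2) hu.ne'
  exact ⟨v, by rw [pow_succ, mul_assoc]; exact hw⟩

lemma nearest_mul_of_lt {j v w : ℕ} (h : j < v) : nearest j (2 ^ v * w) = 2 ^ (v - j) * w := by
  obtain ⟨d, rfl⟩ := Nat.exists_eq_add_of_lt h
  unfold nearest
  have : 0 < 2 ^ j := by positivity
  rw [show 2 * (2 ^ (j + d + 1) * w) + 2 ^ j = 2 ^ j + 2 ^ (j + 1) * (2 ^ (d + 1) * w) by ring,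
    Nat.add_mul_div_left _ _ (by positivity),
    Nat.div_eq_of_lt (Nat.pow_lt_pow_right (by norm_num) (by omega)),
    show j + d + 1 - j = d + 1 by omega, zero_add]

lemma nearest_mul_self {v w : ℕ} : nearest v (2 ^ v * w) = w := by
  unfold nearest
  rw [show 2 * (2 ^ v * w) + 2 ^ v = 2 ^ v * (2 * w + 1) by ring, pow_succ,
    Nat.mul_div_mul_left _ _ (by positivity)]
  omega

/-- Passing from `u - 1` to `u` leaves all `⟨u/2^j⟩` with `j ≥ 1` unchanged except the one with
`j = ν₂(u) + 1`, which grows by `1`. This is how `2`-adic valuations enter the dynamics. -/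
lemma nearest_sub_one {u j : ℕ} (hu : 0 < u) (hj : 0 < j) :
    nearest j u = nearest j (u - 1) + if j = padicValNat 2 u + 1 then 1 else 0 := by
  obtain ⟨w, hw, hodd⟩ := exists_odd_mul hu
  generalize padicValNat 2 u = v at *
  obtain ⟨i, rfl⟩ : ∃ i, j = i + 1 := ⟨j - 1, by omega⟩
  have key : 2 ^ (i + 1) ∣ u + 2 ^ i ↔ i = v := by
    subst hw
    constructor
    · rintro ⟨c, hc⟩
      rcases lt_trichotomy i v with h | h | h
      · obtain ⟨d, rfl⟩ := Nat.exists_eq_add_of_lt h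
        have : 2 ^ i * (2 * (2 ^ d * w) + 1) = 2 ^ i * (2 * c) := by
          calc _ = 2 ^ (i + d + 1) * w + 2 ^ i := by ring
            _ = _ := by rw [hc]; ring
        have := Nat.eq_of_mul_eq_mul_left (by positivity) this
        omega
      · exact h
      · obtain ⟨d, rfl⟩ := Nat.exists_eq_add_of_lt h
        have : 2 ^ v * (w + 2 * 2 ^ d) = 2 ^ v * (2 * (2 * (2 ^ d * c))) := by
          have e : 2 ^ v * w + 2 ^ (v + d + 1) = 2 ^ (v + d + 1 + 1) * c := hc
          calc _ = 2 ^ v * w + 2 ^ (v + d + 1) := by ring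
            _ = _ := by rw [e]; ring
        have := Nat.eq_of_mul_eq_mul_left (by positivity) this
        omega
    · rintro rfl
      exact ⟨(w + 1) / 2, by
        rw [pow_succ, mul_assoc, show 2 * ((w + 1) / 2) = w + 1 by omega]; ring⟩
  unfold nearest
  rw [pow_succ 2 (i + 1), mul_comm (2 ^ (i + 1)) 2, pow_succ 2 i]
  rw [pow_succ 2 i] at key
  have hp : 0 < 2 ^ i := by positivity
  rw [show 2 * u + 2 ^ i * 2 = 2 * (u + 2 ^ i) by ring, Nat.mul_div_mul_left _ _ (by norm_num),
    show 2 * (u - 1) + 2 ^ i * 2 = 2 * (u - 1 + 2 ^ i) by ring,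
    Nat.mul_div_mul_left _ _ (by norm_num), show u + 2 ^ i = (u - 1 + 2 ^ i) + 1 by omega,
    Nat.succ_div, show u - 1 + 2 ^ i + 1 = u + 2 ^ i by omega]
  simp only [key, Nat.add_right_cancel_iff]

lemma nearest_succ_two_mul_add_one {j : ℕ} (hj : 0 < j) (h : ℕ) :
    nearest (j + 1) (2 * h + 1) = nearest j h := by
  rw [nearest_sub_one (by omega) (by omega), Nat.add_sub_cancel, nearest_succ_two_mul,
    padicValNat.eq_zero_of_not_dvd (by omega), if_neg (by omega), add_zero]

lemma nearest_one_two_mul_add_one (h : ℕ) : nearest 1 (2 * h + 1) = h + 1 := by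
  unfold nearest; omega

lemma even_nearest {u j : ℕ} (hu : 0 < u) (hj : j < padicValNat 2 u) : Even (nearest j u) := by
  obtain ⟨w, hw, -⟩ := exists_odd_mul hu
  rw [hw, nearest_mul_of_lt hj]
  exact (((Nat.even_pow).2 ⟨even_two, by omega⟩)).mul_right _

lemma odd_nearest {u : ℕ} (hu : 0 < u) : Odd (nearest (padicValNat 2 u) u) := by
  obtain ⟨w, hw, h⟩ := exists_odd_mul hu
  have : nearest (padicValNat 2 u) u = w := by
    have h1 := nearest_mul_self (v := padicValNat 2 u) (w := w)
    rwa [← hw] at h1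
  rw [this]
  exact Nat.odd_iff.2 h

lemma padicValNat_lt {u l : ℕ} (hu : 0 < u) (h : u < 2 ^ l) : padicValNat 2 u < l := by
  have h1 : 2 ^ padicValNat 2 u ≤ u := Nat.le_of_dvd hu pow_padicValNat_dvd
  exact (Nat.pow_lt_pow_iff_right (by norm_num)).1 (h1.trans_lt h)

/-- Gray code decoding, one digit at a time. -/
lemma nearest_add_eq (j u : ℕ) : (nearest (j + 1) u + u / 2 ^ (j + 1)) % 2 = u / 2 ^ j % 2 := by
  have : nearest (j + 1) u = (u / 2 ^ j + 1) / 2 := by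
    unfold nearest
    rw [pow_succ 2 (j + 1), mul_comm (2 ^ (j + 1)) 2,
      show 2 * u + 2 ^ (j + 1) = 2 * (u + 2 ^ j) by ring, Nat.mul_div_mul_left _ _ (by norm_num),
      pow_succ, ← Nat.div_div_eq_div_mul, Nat.add_div_right _ (by positivity)]
  rw [this, pow_succ, ← Nat.div_div_eq_div_mul]
  omega

lemma sum_bits (l : ℕ) : ∀ u : ℕ,
    ∑ i ∈ Finset.range l, 2 ^ i * (u / 2 ^ i % 2) = u % 2 ^ l := by
  induction l with
  | zero => intro u; simp [Nat.mod_one]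
  | succ l ih =>
    intro u
    rw [Finset.sum_range_succ, ih, Nat.pow_succ, Nat.mod_mul]

/-- A state whose entries `a_1, …, a_l` have the parities of the Gray code digits of `u`
has `n = u`. -/
lemma nOf_st {l u : ℕ} {a : ℕ → ℤ} (hu : u < 2 ^ l)
    (h : ∀ j, 0 < j → j ≤ l → a j % 2 = (nearest j u : ℤ) % 2) : nOf (st (l + 1) a) = u := by
  have hs : ∀ d i, i + d = l →
      (∑ j ∈ Finset.Icc (i + 1) l, a j) % 2 = ((u / 2 ^ i : ℕ) : ℤ) % 2 := by
    intro d
    induction d with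
    | zero =>
      intro i hi
      have : i = l := by omega
      subst this
      simp [Nat.div_eq_of_lt hu]
    | succ d ih =>
      intro i hi
      have h1 := ih (i + 1) (by omega)
      rw [← Finset.insert_Icc_add_one_left_eq_Icc (by omega), Finset.sum_insert (by simp)]
      have h2 := h (i + 1) (by omega) (by omega)
      have h3 := nearest_add_eq i u
      omega
  have hl : ell (st (l + 1) a) = l := by simp [ell]
  rw [nOf, hl, ← Nat.mod_eq_of_lt hu, ← sum_bits]
  apply Finset.sum_congr rfl
  intro i hi
  rw [Finset.mem_range] at hi
  have h1 : ∑ j ∈ Finset.Icc (i + 1) l, entry (st (l + 1) a) j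
      = ∑ j ∈ Finset.Icc (i + 1) l, a j := by
    apply Finset.sum_congr rfl
    intro j hj
    rw [Finset.mem_Icc] at hj
    exact entry_st (by omega)
  rw [h1, hs (l - i) i (by omega)]
  congr 1

/-- The parities of `⟨u/2^j⟩`, `j = 1, …, l`, add up to that of `u`. -/
lemma sum_mod_two {l u : ℕ} {a : ℕ → ℤ} (hu : u < 2 ^ l)
    (h : ∀ j, 0 < j → j ≤ l → a j % 2 = (nearest j u : ℤ) % 2) :
    (st (l + 1) a).sum % 2 = (a 0 + u) % 2 := by
  have hs : ∀ d ≤ l, (∑ j ∈ Finset.range (d + 1), a j + (u / 2 ^ d : ℕ)) % 2 = (a 0 + u) % 2 := by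
    intro d
    induction d with
    | zero => simp
    | succ d ih =>
      intro hd
      have h1 := ih (by omega)
      have h2 := h (d + 1) (by omega) hd
      have h3 := nearest_add_eq d u
      rw [Finset.sum_range_succ]
      omega
  have := hs l le_rfl
  rw [Nat.div_eq_of_lt hu] at this
  simpa [st_sum] using this

/-! ### Stretches of Increment rules -/

/-- The entries of a state with `n = v` on a stretch of Increment rules along which `n` decreases:
each step lowers `v` by `1` and leaves `c`, the entries that would be reached at `v = 0`, unchanged.
It is used with all `c j` even. -/
def Dn (c : ℕ → ℤ) (v : ℕ) : ℕ → ℤ := fun j => if j = 0 then c 0 + v else c j - nearest j v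

/-- The entries of a state with `n = v` on a stretch of Increment rules along which `n` increases:
each step raises `v` by `1` and leaves `c`, the entries extrapolated to `v = 0`, unchanged.
It is used with `c 0` odd and the other `c j` even. -/
def Up (c : ℕ → ℤ) (v : ℕ) : ℕ → ℤ := fun j => if j = 0 then c 0 - v else c j + nearest j v

lemma Dn_zero (c : ℕ → ℤ) (v : ℕ) : Dn c v 0 = c 0 + v := rfl
lemma Up_zero (c : ℕ → ℤ) (v : ℕ) : Up c v 0 = c 0 - v := rfl

lemma Dn_pos (c : ℕ → ℤ) (v : ℕ) {j : ℕ} (hj : 0 < j) : Dn c v j = c j - nearest j v :=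
  if_neg hj.ne'

lemma Up_pos (c : ℕ → ℤ) (v : ℕ) {j : ℕ} (hj : 0 < j) : Up c v j = c j + nearest j v :=
  if_neg hj.ne'

lemma Dn_mod {l : ℕ} {c : ℕ → ℤ} (hc : ∀ j ≤ l, Even (c j)) {v j : ℕ} (hj : j ≤ l) :
    Dn c v j % 2 = (nearest j v : ℤ) % 2 := by
  have := Int.even_iff.1 (hc j hj)
  rcases Nat.eq_zero_or_pos j with h | h
  · subst h; rw [Dn_zero, nearest_zero_left]; omega
  · rw [Dn_pos _ _ h]; omega

lemma Dn_step {l : ℕ} {c : ℕ → ℤ} (hc : ∀ j ≤ l, Even (c j)) {v : ℕ} (h0 : 0 < v)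
    (hv : v < 2 ^ l) (h1 : c 0 + v ≠ -1) :
    ruleOf (st (l + 1) (Dn c v)) = Rule.increment ∧
      P (st (l + 1) (Dn c v)) = st (l + 1) (Dn c (v - 1)) := by
  have hl := padicValNat_lt h0 hv
  have ho : Odd (Dn c v (padicValNat 2 v)) := by
    have := Nat.odd_iff.1 (odd_nearest h0)
    rw [Int.odd_iff, Dn_mod hc hl.le]; omega
  have he : ∀ j < padicValNat 2 v, Even (Dn c v j) := by
    intro j hj
    have := Nat.even_iff.1 (even_nearest h0 hj)
    rw [Int.even_iff, Dn_mod hc (by omega)]; omega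
  refine ⟨ruleOf_inc hl ho h1, ?_⟩
  rw [P_inc hl he ho h1]
  apply st_congr
  intro j _
  rcases Nat.eq_zero_or_pos j with h | h
  · subst h
    simp only [Dn_zero]
    simp
    omega
  · have := nearest_sub_one h0 h
    rw [if_neg h.ne', Dn_pos _ _ h, Dn_pos _ _ h, this]
    split_ifs <;> push_cast <;> ring

lemma Up_step {l : ℕ} {c : ℕ → ℤ} (hc : ∀ j ≤ l, 0 < j → Even (c j)) (hc0 : Odd (c 0)) {v : ℕ}
    (hv : v + 1 < 2 ^ l) (h1 : c 0 - v ≠ -1) :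
    ruleOf (st (l + 1) (Up c v)) = Rule.increment ∧
      P (st (l + 1) (Up c v)) = st (l + 1) (Up c (v + 1)) := by
  have h0 : 0 < v + 1 := by omega
  have hl := padicValNat_lt h0 hv
  have hmod : ∀ j ≤ padicValNat 2 (v + 1), Up c v j % 2 = (nearest j (v + 1) : ℤ) % 2 := by
    intro j hj
    rcases Nat.eq_zero_or_pos j with h | h
    · subst h
      have := Int.odd_iff.1 hc0
      rw [Up_zero, nearest_zero_left]; push_cast; omega
    · have := Int.even_iff.1 (hc j (by omega) h)
      rw [Up_pos _ _ h, nearest_sub_one h0 h, if_neg (by omega)]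
      simp only [Nat.add_sub_cancel, Nat.add_zero]
      omega
  have ho : Odd (Up c v (padicValNat 2 (v + 1))) := by
    have := Nat.odd_iff.1 (odd_nearest h0)
    rw [Int.odd_iff, hmod _ le_rfl]; omega
  have he : ∀ j < padicValNat 2 (v + 1), Even (Up c v j) := by
    intro j hj
    have := Nat.even_iff.1 (even_nearest h0 hj)
    rw [Int.even_iff, hmod _ hj.le]; omega
  refine ⟨ruleOf_inc hl ho h1, ?_⟩
  rw [P_inc hl he ho h1]
  apply st_congr
  intro j _
  rcases Nat.eq_zero_or_pos j with h | h
  · subst h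
    simp only [Up_zero]
    simp
    omega
  · have := nearest_sub_one h0 h
    rw [if_neg h.ne', Up_pos _ _ h, Up_pos _ _ h, this]
    simp only [Nat.add_sub_cancel]
    split_ifs <;> push_cast <;> ring

lemma Dn_leg {l : ℕ} {c : ℕ → ℤ} (hc : ∀ j ≤ l, Even (c j)) {v : ℕ} (hv : v < 2 ^ l) (t : ℕ)
    (ht : t ≤ v) (h1 : ∀ s < t, c 0 + (v : ℤ) - s ≠ -1) :
    P^[t] (st (l + 1) (Dn c v)) = st (l + 1) (Dn c (v - t)) := by
  induction t with
  | zero => rfl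
  | succ t ih =>
    have h2 := h1 t (by omega)
    rw [Function.iterate_succ_apply', ih (by omega) (fun s hs => h1 s (by omega)),
      (Dn_step hc (by omega) (by omega) (by omega)).2]
    rfl

lemma Dn_leg_rule {l : ℕ} {c : ℕ → ℤ} (hc : ∀ j ≤ l, Even (c j)) {v : ℕ} (hv : v < 2 ^ l) (t : ℕ)
    (ht : t < v) (h1 : ∀ s ≤ t, c 0 + (v : ℤ) - s ≠ -1) :
    ruleOf (P^[t] (st (l + 1) (Dn c v))) = Rule.increment := by
  have h2 := h1 t le_rfl
  rw [Dn_leg hc hv t ht.le fun s hs => h1 s hs.le]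
  exact (Dn_step hc (by omega) (by omega) (by omega)).1

lemma Up_leg {l : ℕ} {c : ℕ → ℤ} (hc : ∀ j ≤ l, 0 < j → Even (c j)) (hc0 : Odd (c 0)) {v : ℕ}
    (t : ℕ) (hv : v + t < 2 ^ l) (h1 : ∀ s < t, c 0 - (v : ℤ) - s ≠ -1) :
    P^[t] (st (l + 1) (Up c v)) = st (l + 1) (Up c (v + t)) := by
  induction t with
  | zero => rfl
  | succ t ih =>
    have h2 := h1 t (by omega)
    rw [Function.iterate_succ_apply', ih (by omega) (fun s hs => h1 s (by omega)),
      (Up_step hc hc0 (by omega) (by push_cast; omega)).2]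
    rfl

lemma Up_leg_rule {l : ℕ} {c : ℕ → ℤ} (hc : ∀ j ≤ l, 0 < j → Even (c j)) (hc0 : Odd (c 0))
    {v : ℕ} (t : ℕ) (hv : v + t + 1 < 2 ^ l) (h1 : ∀ s ≤ t, c 0 - (v : ℤ) - s ≠ -1) :
    ruleOf (P^[t] (st (l + 1) (Up c v))) = Rule.increment := by
  have h2 := h1 t le_rfl
  rw [Up_leg hc hc0 t (by omega) fun s hs => h1 s hs.le]
  exact (Up_step hc hc0 (by omega) (by push_cast; omega)).1

lemma nOf_Dn {l : ℕ} {c : ℕ → ℤ} (hc : ∀ j ≤ l, Even (c j)) {v : ℕ} (hv : v < 2 ^ l) :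
    nOf (st (l + 1) (Dn c v)) = v :=
  nOf_st hv fun _ _ hj => Dn_mod hc hj

lemma Up_mod {l : ℕ} {c : ℕ → ℤ} (hc : ∀ j ≤ l, 0 < j → Even (c j)) {v j : ℕ} (h : 0 < j)
    (hj : j ≤ l) : Up c v j % 2 = (nearest j v : ℤ) % 2 := by
  have := Int.even_iff.1 (hc j hj h)
  rw [Up_pos _ _ h]; omega

lemma nOf_Up {l : ℕ} {c : ℕ → ℤ} (hc : ∀ j ≤ l, 0 < j → Even (c j)) {v : ℕ} (hv : v < 2 ^ l) :
    nOf (st (l + 1) (Up c v)) = v :=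
  nOf_st hv fun _ h hj => Up_mod hc h hj

lemma Up_not_empty {l : ℕ} {c : ℕ → ℤ} (hc : ∀ j ≤ l, 0 < j → Even (c j)) (hc0 : Odd (c 0))
    {v : ℕ} (hv : v < 2 ^ l) : ¬ IsEmptyState (st (l + 1) (Up c v)) := by
  rintro ⟨-, -, h, -⟩
  have h1 := sum_mod_two hv fun _ h hj => Up_mod hc (v := v) h hj
  have h2 := Int.odd_iff.1 hc0
  have : Odd (st (l + 1) (Up c v)).sum := by
    rw [Int.odd_iff, h1, Up_zero]; omega
  rw [sigma, if_pos this] at h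
  norm_num at h

lemma Dn_not_empty {l : ℕ} {c : ℕ → ℤ} (hc : ∀ j ≤ l, Even (c j))
    {v : ℕ} (hv : v < 2 ^ l) (h0 : 0 < v) : ¬ IsEmptyState (st (l + 1) (Dn c v)) := by
  rintro ⟨-, h, -, -⟩
  rw [nOf_Dn hc hv] at h
  omega

lemma isEmptyState_st {l : ℕ} {a : ℕ → ℤ} (ha : ∀ j < l + 2, Even (a j))
    (h : ¬ (a (l + 1) = 0 ∧ a l = 0)) : IsEmptyState (st (l + 2) a) := by
  have hm : ∀ j, 0 < j → j ≤ l + 1 → a j % 2 = (nearest j 0 : ℤ) % 2 := by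
    intro j _ hj
    have := Int.even_iff.1 (ha j (by omega))
    rw [nearest_zero_right]; simpa using this
  refine ⟨?_, nOf_st (by positivity) hm, ?_, ruleOf_ne_halt h⟩
  · intro h
    simpa using congrArg List.length h
  · have h1 := sum_mod_two (u := 0) (by positivity) hm
    have h2 := Int.even_iff.1 (ha 0 (by omega))
    rw [sigma, if_neg]
    rw [Int.odd_iff, h1]
    push_cast
    omega

/-! ### From an empty state to the next one -/

/-- The amount by which the Zero rule at length `2k+2` changes the `j`-th total, `j ≥ 1`: it puts
`n` at `2^{2k+1} - 1` and turns on the digit of index `2k+1`. -/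
def zc (k j : ℕ) : ℤ := if j < 2 * k + 1 then 2 ^ (2 * k + 1 - j) else
  if j = 2 * k + 1 then 2 else 0

/-- Totals (in the sense of `Dn`) right after the Zero rule. -/
def c1 (k : ℕ) (a : ℕ → ℤ) : ℕ → ℤ := fun j =>
  if j = 0 then a 0 - 2 * 2 ^ (2 * k) else a j + zc k j

/-- Totals (in the sense of `Up`) right after the first Halve rule. -/
def c2 (k x : ℕ) (a : ℕ → ℤ) : ℕ → ℤ := fun j =>
  if j = 0 then c1 k a 1 - 1 else c1 k a (j + 1) - 2 * nearest j (2 ^ (2 * k) - 1 - x)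

/-- Totals (in the sense of `Dn`) right after the second Halve rule. -/
def c3 (k x h : ℕ) (a : ℕ → ℤ) : ℕ → ℤ := fun j =>
  a (j + 2) + zc k (j + 2) - 2 * nearest (j + 1) (2 ^ (2 * k) - 1 - x) +
    if j = 0 then 0 else 2 * (nearest j h : ℤ)

/-- The empty states of length `2k+2` with `a_0 = 2x` and `a_1 = 2h - 2^{2k}`. From such a state
`n` falls from `2^{2k+1} - 1` by `2x` before the first Halve rule, leaving `h_1 = 2^{2k} - 1 - x`,
and then rises to `2h` (hence `hh`) before the second one, leaving `h_2 = h`. -/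
structure Pre (k x h : ℕ) (a : ℕ → ℤ) : Prop where
  k_pos : 1 ≤ k
  ev : ∀ j, Even (a j)
  out : ∀ j, 2 * k + 1 < j → a j = 0
  a0 : a 0 = 2 * x
  a1 : a 1 + 2 ^ (2 * k) = 2 * h
  hx : x < 2 ^ (2 * k)
  hh : 2 ^ (2 * k) - 1 - x ≤ 2 * h
  not_halt : ruleOf (st (2 * k + 2) a) ≠ Rule.halt

lemma even_zc (k j : ℕ) : Even (zc k j) := by
  unfold zc
  split_ifs
  · exact (Int.even_pow).2 ⟨even_two, by omega⟩
  · exact even_two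
  · exact Even.zero

/-- The values of `⟨(2^{2k+1} - 1)/2^j⟩` for `j ≥ 1`. -/
lemma nearest_top (k j : ℕ) (hj : 0 < j) :
    (nearest j (2 ^ (2 * k + 1) - 1) : ℤ) =
      if j < 2 * k + 1 then 2 ^ (2 * k + 1 - j) else if j = 2 * k + 1 then 1 else 0 := by
  have h := nearest_sub_one (u := 2 ^ (2 * k + 1)) (by positivity) hj
  rw [padicValNat.prime_pow] at h
  have h1 := nearest_mul_of_lt (j := j) (v := 2 * k + 1) (w := 1)
  have h2 := nearest_mul_self (v := 2 * k + 1) (w := 1)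
  rw [mul_one] at h1 h2
  split_ifs with h3 h4
  · rw [h1 h3, if_neg (by omega)] at h
    rw [add_zero, mul_one] at h
    rw [← h]; push_cast; rfl
  · subst h4
    rw [h2, if_neg (by omega)] at h
    omega
  · have : nearest j (2 ^ (2 * k + 1) - 1) = 0 := by
      unfold nearest
      apply Nat.div_eq_of_lt
      have : 2 ^ (2 * k + 2) ≤ 2 ^ j := Nat.pow_le_pow_right (by norm_num) (by omega)
      rw [pow_succ] at this ⊢
      have : 0 < 2 ^ (2 * k + 1) := by positivity
      omega
    rw [this]; rfl

namespace Pre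
variable {k x h : ℕ} {a : ℕ → ℤ} (H : Pre k x h a)
include H

lemma four_le : 4 ≤ 2 ^ (2 * k) := by
  have := H.k_pos
  calc 4 = 2 ^ 2 := by norm_num
    _ ≤ 2 ^ (2 * k) := Nat.pow_le_pow_right (by norm_num) (by omega)

lemma even_c1 (j : ℕ) : Even (c1 k a j) := by
  unfold c1
  split_ifs
  · exact (H.ev 0).sub (even_two_mul _)
  · exact (H.ev j).add (even_zc k j)

lemma c1_one : c1 k a 1 = 2 * h := by
  have := H.k_pos
  rw [← H.a1, c1, if_neg one_ne_zero, zc, if_pos (by omega), Nat.add_sub_cancel]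

lemma c2_zero : c2 k x a 0 = 2 * h - 1 := by
  rw [c2, if_pos rfl, H.c1_one]

lemma odd_c2 : Odd (c2 k x a 0) := by
  rw [H.c2_zero]; exact ⟨h - 1, by ring⟩

lemma even_c2 (j : ℕ) (hj : 0 < j) : Even (c2 k x a j) := by
  rw [c2, if_neg hj.ne']
  exact (H.even_c1 _).sub (even_two_mul _)

lemma even_c3 (j : ℕ) : Even (c3 k x h a j) := by
  unfold c3
  refine (((H.ev _).add (even_zc k _)).sub (even_two_mul _)).add ?_
  split_ifs
  · exact Even.zero
  · exact even_two_mul _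

lemma rule_zero : ruleOf (st (2 * k + 2) a) = Rule.zero :=
  ruleOf_zero (fun j _ => H.ev j) H.not_halt

lemma P_one : P (st (2 * k + 2) a) = st (2 * k + 4) (Dn (c1 k a) (2 ^ (2 * k + 1) - 1)) := by
  rw [P_zero (by omega) (fun j _ => H.ev j) H.not_halt]
  apply st_congr
  intro j hj
  have h4 := H.four_le
  rcases Nat.eq_zero_or_pos j with h0 | h0
  · subst h0
    rw [Dn_zero, c1, if_pos rfl, if_pos rfl]
    have : ((2 ^ (2 * k + 1) - 1 : ℕ) : ℤ) = 2 * 2 ^ (2 * k) - 1 := by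
      rw [Nat.cast_sub Nat.one_le_two_pow]; push_cast; ring
    rw [this]; ring
  · rw [Dn_pos _ _ h0, nearest_top k j h0, c1, if_neg h0.ne', if_neg h0.ne', zc]
    have := H.out j
    split_ifs with h1 h2
    · ring
    · subst h2; ring
    · rw [this (by omega)]; ring

lemma leg1_bound {s : ℕ} (hs : s < 2 * x) :
    c1 k a 0 + ((2 ^ (2 * k + 1) - 1 : ℕ) : ℤ) - s ≠ -1 := by
  rw [Nat.cast_sub Nat.one_le_two_pow, c1, if_pos rfl, H.a0, pow_succ]
  push_cast
  omega

lemma iter1 {t : ℕ} (ht : t ≤ 2 * x) :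
    P^[t + 1] (st (2 * k + 2) a) =
      st (2 * k + 4) (Dn (c1 k a) (2 ^ (2 * k + 1) - 1 - t)) := by
  have hx := H.hx
  have e : 2 ^ (2 * k + 1) = 2 * 2 ^ (2 * k) := by ring
  have e' : 2 ^ (2 * k + 3) = 8 * 2 ^ (2 * k) := by ring
  rw [Function.iterate_succ_apply, H.P_one]
  exact Dn_leg (l := 2 * k + 3) (fun j _ => H.even_c1 j) (by omega) t (by omega)
    fun s hs => H.leg1_bound (by omega)

lemma rule1 {t : ℕ} (ht : t < 2 * x) :
    ruleOf (P^[t + 1] (st (2 * k + 2) a)) = Rule.increment := by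
  have hx := H.hx
  have e : 2 ^ (2 * k + 1) = 2 * 2 ^ (2 * k) := by ring
  have e' : 2 ^ (2 * k + 3) = 8 * 2 ^ (2 * k) := by ring
  rw [Function.iterate_succ_apply, H.P_one]
  exact Dn_leg_rule (l := 2 * k + 3) (fun j _ => H.even_c1 j) (by omega) t (by omega)
    fun s hs => H.leg1_bound (by omega)

lemma not_empty1 {t : ℕ} (ht : t ≤ 2 * x) :
    ¬ IsEmptyState (P^[t + 1] (st (2 * k + 2) a)) := by
  have hx := H.hx
  have e : 2 ^ (2 * k + 1) = 2 * 2 ^ (2 * k) := by ring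
  have e' : 2 ^ (2 * k + 3) = 8 * 2 ^ (2 * k) := by ring
  rw [H.iter1 ht]
  exact Dn_not_empty (l := 2 * k + 3) (fun j _ => H.even_c1 j) (by omega) (by omega)

lemma end1 : Dn (c1 k a) (2 ^ (2 * k + 1) - 1 - 2 * x) 0 = -1 := by
  have hx := H.hx
  have e : 2 ^ (2 * k + 1) = 2 * 2 ^ (2 * k) := by ring
  have : ((2 ^ (2 * k + 1) - 1 - 2 * x : ℕ) : ℤ) = 2 * 2 ^ (2 * k) - 1 - 2 * x := by
    rw [Nat.cast_sub (by omega), Nat.cast_sub Nat.one_le_two_pow, e]; push_cast; ring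
  rw [Dn_zero, c1, if_pos rfl, H.a0, this]
  ring

lemma rule_halve1 : ruleOf (P^[2 * x + 1] (st (2 * k + 2) a)) = Rule.halve := by
  rw [H.iter1 le_rfl]
  exact ruleOf_halve (l := 2 * k + 3) (by omega) H.end1

lemma iter_halve1 : P^[2 * x + 2] (st (2 * k + 2) a) =
    st (2 * k + 3) (Up (c2 k x a) (2 ^ (2 * k) - 1 - x)) := by
  rw [Function.iterate_succ_apply', H.iter1 le_rfl, P_halve (l := 2 * k + 3) (by omega) H.end1]
  have hx := H.hx
  have e : 2 ^ (2 * k + 1) - 1 - 2 * x = 2 * (2 ^ (2 * k) - 1 - x) + 1 := by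
    rw [pow_succ]; omega
  rw [e]
  apply st_congr
  intro j _
  rw [Dn_pos _ _ (by omega)]
  rcases Nat.eq_zero_or_pos j with h0 | h0
  · subst h0
    rw [Up_zero, zero_add, nearest_one_two_mul_add_one, c2, if_pos rfl]
    push_cast; ring
  · rw [Up_pos _ _ h0, nearest_succ_two_mul_add_one h0, c2, if_neg h0.ne']
    ring

lemma leg2_bound {s : ℕ} (hs : s + (2 ^ (2 * k) - 1 - x) < 2 * h) :
    c2 k x a 0 - ((2 ^ (2 * k) - 1 - x : ℕ) : ℤ) - s ≠ -1 := by
  rw [H.c2_zero]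
  omega

lemma iter2 {t : ℕ} (ht : t + (2 ^ (2 * k) - 1 - x) ≤ 2 * h)
    (ht' : t + (2 ^ (2 * k) - 1 - x) < 4 * 2 ^ (2 * k)) :
    P^[t + (2 * x + 2)] (st (2 * k + 2) a) =
      st (2 * k + 3) (Up (c2 k x a) (2 ^ (2 * k) - 1 - x + t)) := by
  have e' : 2 ^ (2 * k + 2) = 4 * 2 ^ (2 * k) := by ring
  rw [Function.iterate_add_apply, H.iter_halve1]
  exact Up_leg (l := 2 * k + 2) (fun j _ => H.even_c2 j) H.odd_c2 t (by omega)
    fun s hs => H.leg2_bound (by omega)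

lemma rule2 {t : ℕ} (ht : t + (2 ^ (2 * k) - 1 - x) < 2 * h)
    (ht' : t + (2 ^ (2 * k) - 1 - x) + 1 < 4 * 2 ^ (2 * k)) :
    ruleOf (P^[t + (2 * x + 2)] (st (2 * k + 2) a)) = Rule.increment := by
  have e' : 2 ^ (2 * k + 2) = 4 * 2 ^ (2 * k) := by ring
  rw [Function.iterate_add_apply, H.iter_halve1]
  exact Up_leg_rule (l := 2 * k + 2) (fun j _ => H.even_c2 j) H.odd_c2 t (by omega)
    fun s hs => H.leg2_bound (by omega)

lemma not_empty2 {t : ℕ} (ht : t + (2 ^ (2 * k) - 1 - x) ≤ 2 * h)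
    (ht' : t + (2 ^ (2 * k) - 1 - x) < 4 * 2 ^ (2 * k)) :
    ¬ IsEmptyState (P^[t + (2 * x + 2)] (st (2 * k + 2) a)) := by
  have e' : 2 ^ (2 * k + 2) = 4 * 2 ^ (2 * k) := by ring
  rw [H.iter2 ht ht']
  exact Up_not_empty (l := 2 * k + 2) (fun j _ => H.even_c2 j) H.odd_c2 (by omega)

lemma end2 : Up (c2 k x a) (2 * h) 0 = -1 := by
  rw [Up_zero, H.c2_zero]
  push_cast; ring

lemma iter2_end (hlt : h < 2 * 2 ^ (2 * k)) :
    P^[2 * h - (2 ^ (2 * k) - 1 - x) + (2 * x + 2)] (st (2 * k + 2) a) =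
      st (2 * k + 3) (Up (c2 k x a) (2 * h)) := by
  have := H.hh
  rw [H.iter2 (by omega) (by omega),
    show 2 ^ (2 * k) - 1 - x + (2 * h - (2 ^ (2 * k) - 1 - x)) = 2 * h by omega]

lemma rule_halve2 (hlt : h < 2 * 2 ^ (2 * k)) :
    ruleOf (P^[2 * h - (2 ^ (2 * k) - 1 - x) + (2 * x + 2)] (st (2 * k + 2) a)) = Rule.halve := by
  rw [H.iter2_end hlt]
  exact ruleOf_halve (l := 2 * k + 2) (by omega) H.end2

lemma iter_halve2 (hlt : h < 2 * 2 ^ (2 * k)) :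
    P^[2 * h - (2 ^ (2 * k) - 1 - x) + (2 * x + 2) + 1] (st (2 * k + 2) a) =
      st (2 * k + 2) (Dn (c3 k x h a) h) := by
  rw [Function.iterate_succ_apply', H.iter2_end hlt,
    P_halve (l := 2 * k + 2) (by omega) H.end2]
  apply st_congr
  intro j _
  rw [Up_pos _ _ (by omega), nearest_succ_two_mul, c2, if_neg (by omega), c1, if_neg (by omega)]
  rcases Nat.eq_zero_or_pos j with h0 | h0
  · subst h0
    rw [Dn_zero, c3, if_pos rfl, nearest_zero_left]
    ring
  · rw [Dn_pos _ _ h0, c3, if_neg h0.ne']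
    ring

/-- Between the Zero rule and the second Halve rule, only Increment rules occur, apart from the
first Halve rule at time `2x + 1`. -/
lemma rule_early (hlt : h < 2 * 2 ^ (2 * k)) {t : ℕ} (h0 : 0 < t)
    (ht : t < 2 * h - (2 ^ (2 * k) - 1 - x) + (2 * x + 2)) (hne : t ≠ 2 * x + 1) :
    ruleOf (P^[t] (st (2 * k + 2) a)) = Rule.increment := by
  rcases lt_or_gt_of_ne hne with h1 | h1
  · obtain ⟨s, rfl⟩ : ∃ s, t = s + 1 := ⟨t - 1, by omega⟩
    exact H.rule1 (by omega)
  · obtain ⟨s, rfl⟩ : ∃ s, t = s + (2 * x + 2) := ⟨t - (2 * x + 2), by omega⟩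
    exact H.rule2 (by omega) (by omega)

lemma hVal_eq (hlt : h < 2 * 2 ^ (2 * k)) :
    hVal (st (2 * k + 2) a) 1 = 2 ^ (2 * k) - 1 - x ∧ hVal (st (2 * k + 2) a) 2 = h := by
  set p : ℕ → Prop := fun j => ruleOf (P^[j] (st (2 * k + 2) a)) = Rule.halve with hp
  have p1 : p (2 * x + 1) := H.rule_halve1
  have p2 : p (2 * h - (2 ^ (2 * k) - 1 - x) + (2 * x + 2)) := H.rule_halve2 hlt
  have pn : ∀ t < 2 * h - (2 ^ (2 * k) - 1 - x) + (2 * x + 2), t ≠ 2 * x + 1 → ¬ p t := by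
    intro t ht hne hpt
    rcases Nat.eq_zero_or_pos t with h0 | h0
    · subst h0
      have : ruleOf (st (2 * k + 2) a) = Rule.halve := hpt
      rw [H.rule_zero] at this
      cases this
    · have : ruleOf (P^[t] (st (2 * k + 2) a)) = Rule.halve := hpt
      rw [H.rule_early hlt h0 ht hne] at this
      cases this
  have n1 : Nat.nth p 0 = 2 * x + 1 := by
    have : Nat.count p (2 * x + 1) = 0 := by
      rw [Nat.count_eq_card_filter_range, Finset.card_eq_zero, Finset.filter_eq_empty_iff]
      intro t ht
      rw [Finset.mem_range] at ht
      exact pn t (by omega) (by omega)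
    rw [← this, Nat.nth_count p1]
  have n2 : Nat.nth p 1 = 2 * h - (2 ^ (2 * k) - 1 - x) + (2 * x + 2) := by
    have : Nat.count p (2 * h - (2 ^ (2 * k) - 1 - x) + (2 * x + 2)) = 1 := by
      rw [Nat.count_eq_card_filter_range, Finset.card_eq_one]
      refine ⟨2 * x + 1, ?_⟩
      ext t
      rw [Finset.mem_filter, Finset.mem_range, Finset.mem_singleton]
      constructor
      · rintro ⟨h1, h2⟩
        by_contra hne
        exact pn t h1 hne h2
      · rintro rfl
        exact ⟨by omega, p1⟩
    have h1 := Nat.nth_count p2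
    rwa [this] at h1
  have hx := H.hx
  refine ⟨?_, ?_⟩
  · change nOf (P^[Nat.nth p 0 + 1] _) = _
    rw [n1, H.iter_halve1]
    exact nOf_Up (l := 2 * k + 2) (fun j _ => H.even_c2 j) (by
      rw [show 2 ^ (2 * k + 2) = 4 * 2 ^ (2 * k) by ring]; omega)
  · change nOf (P^[Nat.nth p 1 + 1] _) = _
    rw [n2, H.iter_halve2 hlt]
    exact nOf_Dn (l := 2 * k + 1) (fun j _ => H.even_c3 j) (by
      rw [show 2 ^ (2 * k + 1) = 2 * 2 ^ (2 * k) by ring]; omega)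

lemma iter3 (hlt : h < 2 * 2 ^ (2 * k)) (h3 : 0 ≤ c3 k x h a 0) {t : ℕ} (ht : t ≤ h) :
    P^[t + (2 * h - (2 ^ (2 * k) - 1 - x) + (2 * x + 2) + 1)] (st (2 * k + 2) a) =
      st (2 * k + 2) (Dn (c3 k x h a) (h - t)) := by
  have e' : 2 ^ (2 * k + 1) = 2 * 2 ^ (2 * k) := by ring
  rw [Function.iterate_add_apply, H.iter_halve2 hlt]
  exact Dn_leg (l := 2 * k + 1) (fun j _ => H.even_c3 j) (by omega) t ht
    fun s hs => by omega

lemma rule3 (hlt : h < 2 * 2 ^ (2 * k)) (h3 : 0 ≤ c3 k x h a 0) {t : ℕ} (ht : t < h) :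
    ruleOf (P^[t + (2 * h - (2 ^ (2 * k) - 1 - x) + (2 * x + 2) + 1)] (st (2 * k + 2) a)) =
      Rule.increment := by
  have e' : 2 ^ (2 * k + 1) = 2 * 2 ^ (2 * k) := by ring
  rw [Function.iterate_add_apply, H.iter_halve2 hlt]
  exact Dn_leg_rule (l := 2 * k + 1) (fun j _ => H.even_c3 j) (by omega) t ht
    fun s hs => by omega

lemma not_empty3 (hlt : h < 2 * 2 ^ (2 * k)) (h3 : 0 ≤ c3 k x h a 0) {t : ℕ} (ht : t < h) :
    ¬ IsEmptyState
      (P^[t + (2 * h - (2 ^ (2 * k) - 1 - x) + (2 * x + 2) + 1)] (st (2 * k + 2) a)) := by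
  have e' : 2 ^ (2 * k + 1) = 2 * 2 ^ (2 * k) := by ring
  rw [H.iter3 hlt h3 ht.le]
  exact Dn_not_empty (l := 2 * k + 1) (fun j _ => H.even_c3 j) (by omega) (by omega)

lemma iter_end (hlt : h < 2 * 2 ^ (2 * k)) (h3 : 0 ≤ c3 k x h a 0) :
    P^[h + (2 * h - (2 ^ (2 * k) - 1 - x) + (2 * x + 2) + 1)] (st (2 * k + 2) a) =
      st (2 * k + 2) (c3 k x h a) := by
  rw [H.iter3 hlt h3 le_rfl, Nat.sub_self]
  apply st_congr
  intro j _
  rcases Nat.eq_zero_or_pos j with h0 | h0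
  · subst h0; simp [Dn_zero]
  · rw [Dn_pos _ _ h0, nearest_zero_right]; simp

/-- When `a_0` stays nonnegative on the last stretch, `n` falls from `h` to `0` without a further
Halve rule, and the state reached is the next empty one. -/
lemma nextEmpty (hlt : h < 2 * 2 ^ (2 * k)) (h3 : 0 ≤ c3 k x h a 0)
    (hpos : ¬ (c3 k x h a (2 * k + 1) = 0 ∧ c3 k x h a (2 * k) = 0)) :
    NextEmptyAt (st (2 * k + 2) a)
      (h + (2 * h - (2 ^ (2 * k) - 1 - x) + (2 * x + 2) + 1)) := by
  refine ⟨by omega, ?_, ?_⟩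
  · rw [H.iter_end hlt h3]
    exact isEmptyState_st (fun j _ => H.even_c3 j) hpos
  · intro t h0 ht
    by_cases h1 : t ≤ 2 * x + 1
    · obtain ⟨s, rfl⟩ : ∃ s, t = s + 1 := ⟨t - 1, by omega⟩
      exact H.not_empty1 (by omega)
    · have := H.hh
      by_cases h2 : t ≤ 2 * h - (2 ^ (2 * k) - 1 - x) + (2 * x + 2)
      · obtain ⟨s, rfl⟩ : ∃ s, t = s + (2 * x + 2) := ⟨t - (2 * x + 2), by omega⟩
        exact H.not_empty2 (by omega) (by omega)
      · obtain ⟨s, rfl⟩ : ∃ s, t = s + (2 * h - (2 ^ (2 * k) - 1 - x) + (2 * x + 2) + 1) :=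
          ⟨t - (2 * h - (2 ^ (2 * k) - 1 - x) + (2 * x + 2) + 1), by omega⟩
        exact H.not_empty3 hlt h3 (by omega)

end Pre

lemma NextEmptyAt.unique {E : State} {m n : ℕ} (hm : NextEmptyAt E m) (hn : NextEmptyAt E n) :
    m = n := by
  rcases lt_trichotomy m n with h | h | h
  · exact absurd hm.2.1 (hn.2.2 m hm.1 h)
  · exact h
  · exact absurd hn.2.1 (hm.2.2 n hn.1 h)

lemma NextEmptyAt.N_eq {E : State} {m : ℕ} (hm : NextEmptyAt E m) : N E = P^[m] E := by
  have h : ∃ m, NextEmptyAt E m := ⟨m, hm⟩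
  rw [N, dif_pos h, h.choose_spec.unique hm]

namespace Pre
variable {k x h : ℕ} {a : ℕ → ℤ} (H : Pre k x h a)
include H

lemma N_eq (hlt : h < 2 * 2 ^ (2 * k)) (h3 : 0 ≤ c3 k x h a 0)
    (hpos : ¬ (c3 k x h a (2 * k + 1) = 0 ∧ c3 k x h a (2 * k) = 0)) :
    N (st (2 * k + 2) a) = st (2 * k + 2) (c3 k x h a) := by
  rw [(H.nextEmpty hlt h3 hpos).N_eq, H.iter_end hlt h3]

lemma reaches_N (hlt : h < 2 * 2 ^ (2 * k)) (h3 : 0 ≤ c3 k x h a 0)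
    (hpos : ¬ (c3 k x h a (2 * k + 1) = 0 ∧ c3 k x h a (2 * k) = 0)) :
    Reaches (st (2 * k + 2) a) (N (st (2 * k + 2) a)) :=
  ⟨_, (H.nextEmpty hlt h3 hpos).N_eq.symm⟩

lemma isEmpty : IsEmptyState (st (2 * k + 2) a) := by
  have hm : ∀ j, 0 < j → j ≤ 2 * k + 1 → a j % 2 = (nearest j 0 : ℤ) % 2 := by
    intro j _ hj
    have := Int.even_iff.1 (H.ev j)
    rw [nearest_zero_right]; simpa using this
  refine ⟨fun h => by simpa using congrArg List.length h, nOf_st (by positivity) hm, ?_,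
    H.not_halt⟩
  have h1 := sum_mod_two (u := 0) (by positivity) hm
  have h2 := Int.even_iff.1 (H.ev 0)
  rw [sigma, if_neg]
  rw [Int.odd_iff, h1]
  push_cast
  omega

lemma embanked (hlt : h < 2 * 2 ^ (2 * k)) (h3 : 0 ≤ c3 k x h a 0)
    (hpos : ¬ (c3 k x h a (2 * k + 1) = 0 ∧ c3 k x h a (2 * k) = 0)) :
    Embanked (st (2 * k + 2) a) := by
  have := H.hh
  refine ⟨H.isEmpty, _, _, _, H.nextEmpty hlt h3 hpos, ?_, ?_, ?_, H.rule_halve1,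
    H.rule_halve2 hlt, ?_⟩
  · omega
  · omega
  · omega
  · intro t ht0 ht h1 h2
    by_cases h5 : t < 2 * h - (2 ^ (2 * k) - 1 - x) + (2 * x + 2)
    · exact H.rule_early hlt ht0 h5 h1
    · obtain ⟨s, rfl⟩ : ∃ s, t = s + (2 * h - (2 ^ (2 * k) - 1 - x) + (2 * x + 2) + 1) :=
          ⟨t - (2 * h - (2 ^ (2 * k) - 1 - x) + (2 * x + 2) + 1), by omega⟩
      exact H.rule3 hlt h3 (by omega)

end Pre

/-! ### The steps of `N'` -/

lemma Reaches.trans {S T U : State} (h1 : Reaches S T) (h2 : Reaches T U) : Reaches S U := by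
  obtain ⟨m, rfl⟩ := h1
  obtain ⟨n, rfl⟩ := h2
  exact ⟨n + m, Function.iterate_add_apply _ _ _ _⟩

lemma Reaches.refl (S : State) : Reaches S S := ⟨0, rfl⟩

/-- The invariant of the states met along the iterates of `N'`, and of the empty states between
them: `h = (2^{2k} - 1 - x, 2^{2k} + y)`, and `rel` says that, as long as `y < 2^{2k}`, the next
empty state differs only in the entry `a_i`, which is larger by `2`. -/
structure W (k x y i : ℕ) (a : ℕ → ℤ) : Prop where
  k_pos : 1 ≤ k
  ev : ∀ j, Even (a j)
  out : ∀ j, 2 * k + 1 < j → a j = 0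
  a0 : a 0 = 2 * x
  a1 : a 1 = 2 ^ (2 * k) + 2 * y
  hx : x < 2 ^ (2 * k)
  pos1 : 0 ≤ a (2 * k + 1)
  pos2 : 0 < a (2 * k)
  rel : ∀ j ≤ 2 * k + 1, c3 k x (2 ^ (2 * k) + y) a j = a j + if j = i then 2 else 0

namespace W
variable {k x y i : ℕ} {a : ℕ → ℤ} (H : W k x y i a)
include H

lemma pre : Pre k x (2 ^ (2 * k) + y) a where
  k_pos := H.k_pos
  ev := H.ev
  out := H.out
  a0 := H.a0
  a1 := by rw [H.a1]; push_cast; ring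
  hx := H.hx
  hh := by omega
  not_halt := ruleOf_ne_halt fun h => H.pos2.ne' h.2

lemma c3_zero : 0 ≤ c3 k x (2 ^ (2 * k) + y) a 0 := by
  rw [H.rel 0 (by omega), H.a0]
  split_ifs <;> omega

lemma c3_top : ¬ (c3 k x (2 ^ (2 * k) + y) a (2 * k + 1) = 0 ∧
    c3 k x (2 ^ (2 * k) + y) a (2 * k) = 0) := by
  rintro ⟨-, h⟩
  rw [H.rel _ (by omega)] at h
  have := H.pos2
  split_ifs at h <;> omega

lemma N_eq (hy : y < 2 ^ (2 * k)) :
    N (st (2 * k + 2) a) = st (2 * k + 2) (fun j => a j + if j = i then 2 else 0) := by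
  rw [H.pre.N_eq (by omega) H.c3_zero H.c3_top]
  exact st_congr fun j hj => H.rel j (by omega)

lemma N_eq_bump (hy : y < 2 ^ (2 * k)) (hi : i < 2 * k + 2) :
    N (st (2 * k + 2) a) = bump (st (2 * k + 2) a) i := by
  rw [H.N_eq hy, bump_st hi]

lemma reaches_N (hy : y < 2 ^ (2 * k)) :
    Reaches (st (2 * k + 2) a) (N (st (2 * k + 2) a)) :=
  H.pre.reaches_N (by omega) H.c3_zero H.c3_top

lemma embanked (hy : y < 2 ^ (2 * k)) : Embanked (st (2 * k + 2) a) :=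
  H.pre.embanked (by omega) H.c3_zero H.c3_top

/-- Raising `a_i` with `i ≥ 2` leaves `h` unchanged, so the next step raises `a_{i-2}`. -/
lemma lower (hi : 2 ≤ i) (hi' : i ≤ 2 * k + 1) :
    W k x y (i - 2) (fun j => a j + if j = i then 2 else 0) where
  k_pos := H.k_pos
  ev j := (H.ev j).add (by split_ifs <;> decide)
  out j hj := by rw [H.out j hj, if_neg (by omega)]; rfl
  a0 := by rw [H.a0, if_neg (by omega), add_zero]
  a1 := by rw [H.a1, if_neg (by omega), add_zero]
  hx := H.hx
  pos1 := by have := H.pos1; split_ifs <;> omega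
  pos2 := by have := H.pos2; split_ifs <;> omega
  rel j hj := by
    rw [← H.rel j hj]
    simp only [c3]
    have : (j = i - 2) ↔ (j + 2 = i) := by omega
    simp only [this]
    ring

/-- Iterating `lower` down to an index in `{0, 1}`. -/
lemma chain (hy : y < 2 ^ (2 * k)) (hi : i ≤ 2 * k + 1) :
    ∃ b, W k x y (i % 2) b ∧ N^[i / 2] (st (2 * k + 2) a) = st (2 * k + 2) b ∧
      Reaches (st (2 * k + 2) a) (st (2 * k + 2) b) := by
  induction i using Nat.strong_induction_on generalizing a with
  | _ i ih =>
    by_cases h2 : 2 ≤ i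
    · obtain ⟨b, hb, hN, hR⟩ := ih (i - 2) (by omega) (H.lower h2 hi) (by omega)
      refine ⟨b, by rwa [show i % 2 = (i - 2) % 2 by omega], ?_, ?_⟩
      · rw [show i / 2 = (i - 2) / 2 + 1 by omega, Function.iterate_succ_apply, H.N_eq hy, hN]
      · refine (H.reaches_N hy).trans ?_
        rwa [H.N_eq hy]
    · refine ⟨a, by rwa [Nat.mod_eq_of_lt (by omega)], ?_, Reaches.refl _⟩
      rw [Nat.div_eq_of_lt (by omega)]
      rfl

lemma N'_eq (hy : y < 2 ^ (2 * k)) (hi : i ≤ 2 * k + 1) :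
    N' (st (2 * k + 2) a) = N (N^[i / 2] (st (2 * k + 2) a)) := by
  have h : ∃ i', i' < (st (2 * k + 2) a).length ∧
      N (st (2 * k + 2) a) = bump (st (2 * k + 2) a) i' :=
    ⟨i, by rw [st_length]; omega, H.N_eq_bump hy (by omega)⟩
  have key : ∀ c, c < (st (2 * k + 2) a).length →
      N (st (2 * k + 2) a) = bump (st (2 * k + 2) a) c → c = i := by
    intro c h1 h2
    rw [st_length] at h1
    by_contra hne
    rw [H.N_eq hy, bump_st h1] at h2
    have h3 := congrArg (fun S => entry S i) h2
    rw [entry_st (by omega), entry_st (by omega), if_pos rfl, if_neg (Ne.symm hne)] at h3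
    omega
  have hc : h.choose = i := key _ h.choose_spec.1 h.choose_spec.2
  rw [N', dif_pos h, hc, show (i + 2) / 2 = i / 2 + 1 by omega, Function.iterate_succ_apply']

/-- A step raising `a_1`, i.e. raising `y`; the next index is read off from `ν₂` of the new `h_2`. -/
lemma step_y (hy : y < 2 ^ (2 * k)) (hi : i ≤ 2 * k + 1) (ho : i % 2 = 1) :
    ∃ b, W k x y 1 b ∧ N' (st (2 * k + 2) a) = N (st (2 * k + 2) b) ∧
      Reaches (st (2 * k + 2) a) (N' (st (2 * k + 2) a)) ∧
      ∃ a', N' (st (2 * k + 2) a) = st (2 * k + 2) a' ∧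
        W k x (y + 1) (padicValNat 2 (2 ^ (2 * k) + (y + 1)) + 1) a' := by
  obtain ⟨b, hb, hN, hR⟩ := H.chain hy hi
  rw [ho] at hb
  have hN' : N' (st (2 * k + 2) a) = N (st (2 * k + 2) b) := by rw [H.N'_eq hy hi, hN]
  refine ⟨b, hb, hN', ?_, (fun j => b j + if j = 1 then 2 else 0), ?_, ?_⟩
  · rw [hN']; exact hR.trans (hb.reaches_N hy)
  · rw [hN', hb.N_eq hy]
  · have hk := H.k_pos
    refine ⟨hk, fun j => (hb.ev j).add (by split_ifs <;> decide), ?_, ?_, ?_, hb.hx, ?_, ?_, ?_⟩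
    · intro j hj; rw [hb.out j hj, if_neg (by omega)]; rfl
    · rw [hb.a0, if_neg (by omega), add_zero]
    · rw [hb.a1, if_pos rfl]; push_cast; ring
    · have := hb.pos1; split_ifs <;> omega
    · have := hb.pos2; split_ifs <;> omega
    · intro j hj
      rw [← hb.rel j hj]
      simp only [c3]
      rcases Nat.eq_zero_or_pos j with h0 | h0
      · subst h0; simp
      · have := nearest_sub_one (u := 2 ^ (2 * k) + (y + 1)) (by omega) h0
        rw [show 2 ^ (2 * k) + (y + 1) - 1 = 2 ^ (2 * k) + y by omega] at this
        rw [if_neg (by omega : ¬ j + 2 = 1), if_neg h0.ne', if_neg h0.ne', this]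
        split_ifs <;> push_cast <;> ring

/-- A step raising `a_0`, i.e. raising `x`; the next index is `ν₂` of the old `h_1`. -/
lemma step_x (hy : y < 2 ^ (2 * k)) (hi : i ≤ 2 * k + 1) (he : i % 2 = 0)
    (hx' : x + 1 < 2 ^ (2 * k)) :
    Reaches (st (2 * k + 2) a) (N' (st (2 * k + 2) a)) ∧
      ∃ a', N' (st (2 * k + 2) a) = st (2 * k + 2) a' ∧
        W k (x + 1) y (padicValNat 2 (2 ^ (2 * k) - (x + 1))) a' := by
  obtain ⟨b, hb, hN, hR⟩ := H.chain hy hi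
  rw [he] at hb
  have hN' : N' (st (2 * k + 2) a) = N (st (2 * k + 2) b) := by rw [H.N'_eq hy hi, hN]
  refine ⟨?_, (fun j => b j + if j = 0 then 2 else 0), ?_, ?_⟩
  · rw [hN']; exact hR.trans (hb.reaches_N hy)
  · rw [hN', hb.N_eq hy]
  · have hk := H.k_pos
    refine ⟨hk, fun j => (hb.ev j).add (by split_ifs <;> decide), ?_, ?_, ?_, hx', ?_, ?_, ?_⟩
    · intro j hj; rw [hb.out j hj, if_neg (by omega)]; rfl
    · rw [hb.a0, if_pos rfl]; push_cast; ring
    · rw [hb.a1, if_neg (by omega), add_zero]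
    · have := hb.pos1; split_ifs <;> omega
    · have := hb.pos2; split_ifs <;> omega
    · intro j hj
      rw [← hb.rel j hj]
      simp only [c3]
      have := nearest_sub_one (u := 2 ^ (2 * k) - (x + 1)) (j := j + 1) (by omega) (by omega)
      simp only [Nat.add_right_cancel_iff] at this
      rw [if_neg (by omega : ¬ j + 2 = 0),
        show 2 ^ (2 * k) - 1 - x = 2 ^ (2 * k) - (x + 1) by omega, this,
        show 2 ^ (2 * k) - 1 - (x + 1) = 2 ^ (2 * k) - (x + 1) - 1 by omega]
      split_ifs <;> push_cast <;> ring

end W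

lemma nearest_top' (l j : ℕ) (hj : 0 < j) (hl : j ≤ l) :
    (nearest j (2 ^ l - 1) : ℤ) = 2 ^ (l - j) := by
  have h := nearest_sub_one (u := 2 ^ l) (by positivity) hj
  rw [padicValNat.prime_pow, if_neg (by omega), add_zero] at h
  rw [← h]
  rcases lt_or_eq_of_le hl with h1 | rfl
  · have := nearest_mul_of_lt (w := 1) h1
    rw [mul_one, mul_one] at this
    rw [this]; push_cast; rfl
  · have := nearest_mul_self (v := j) (w := 1)
    rw [mul_one] at this
    rw [this]; simp

/-- At `h = (1, 2^{2k+1})` an Overflow happens, so the state is not embanked, and the next empty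
state is longer, so `N'` takes its junk value there. -/
lemma W.last {k i : ℕ} {a : ℕ → ℤ} (H : W k (2 ^ (2 * k) - 2) (2 ^ (2 * k)) i a) :
    ¬ Embanked (st (2 * k + 2) a) ∧ N' (st (2 * k + 2) a) = st (2 * k + 2) a := by
  have Q := H.pre
  have h4 := Q.four_le
  have hk := H.k_pos
  set x := 2 ^ (2 * k) - 2 with hxdef
  have hpow : 2 ^ (2 * k + 2) = 4 * 2 ^ (2 * k) := by ring
  have hit := Q.iter2 (t := 2 ^ (2 * k + 2) - 2) (by omega) (by omega)
  rw [show 2 ^ (2 * k) - 1 - x + (2 ^ (2 * k + 2) - 2) = 2 ^ (2 * k + 2) - 1 by omega] at hit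
  set u := Up (c2 k x a) (2 ^ (2 * k + 2) - 1) with hu
  set T := 2 ^ (2 * k + 2) - 2 + (2 * x + 2) with hT
  have u0 : u 0 = 0 := by
    rw [hu, Up_zero, Q.c2_zero, Nat.cast_sub Nat.one_le_two_pow, hpow]
    push_cast; ring
  have uj : ∀ j, 0 < j → j ≤ 2 * k + 2 → u j = c2 k x a j + 2 ^ (2 * k + 2 - j) := by
    intro j h0 hj
    rw [hu, Up_pos _ _ h0, nearest_top' _ _ h0 hj]
  have ue : ∀ j < 2 * k + 2, Even (u j) := by
    intro j hj
    rcases Nat.eq_zero_or_pos j with h0 | h0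
    · subst h0; rw [u0]; exact Even.zero
    · rw [uj j h0 hj.le]
      exact (Q.even_c2 j h0).add ((Int.even_pow).2 ⟨even_two, by omega⟩)
  have utop : u (2 * k + 2) = 1 := by
    rw [uj _ (by omega) le_rfl, c2, if_neg (by omega), c1, if_neg (by omega), zc,
      if_neg (by omega), if_neg (by omega), H.out _ (by omega),
      show 2 ^ (2 * k) - 1 - x = 1 by omega]
    have : nearest (2 * k + 2) 1 = 0 := by
      unfold nearest
      apply Nat.div_eq_of_lt
      rw [pow_succ]; omega
    rw [this]; simp
  have ho : Odd (u (2 * k + 2)) := by rw [utop]; exact odd_one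
  have hrule : ruleOf (P^[T] (st (2 * k + 2) a)) = Rule.overflow := by
    rw [hit]; exact ruleOf_overflow ue ho
  have hP : P^[T + 1] (st (2 * k + 2) a) = st (2 * k + 4)
      (fun j => if j < 2 * k + 2 then u j else if j = 2 * k + 2 then u (2 * k + 2) + 1 else 0) := by
    rw [Function.iterate_succ_apply', hit]; exact P_overflow ue ho
  have hne : NextEmptyAt (st (2 * k + 2) a) (T + 1) := by
    refine ⟨by omega, ?_, ?_⟩
    · rw [hP]
      apply isEmptyState_st (l := 2 * k + 2)
      · intro j hj
        split_ifs with h1 h2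
        · exact ue j h1
        · rw [utop]; decide
        · exact Even.zero
      · rw [if_neg (by omega), if_neg (by omega), if_neg (by omega), if_pos rfl, utop]
        omega
    · intro t h0 ht
      by_cases h1 : t ≤ 2 * x + 1
      · obtain ⟨s, rfl⟩ : ∃ s, t = s + 1 := ⟨t - 1, by omega⟩
        exact Q.not_empty1 (by omega)
      · obtain ⟨s, rfl⟩ : ∃ s, t = s + (2 * x + 2) := ⟨t - (2 * x + 2), by omega⟩
        exact Q.not_empty2 (by omega) (by omega)
  refine ⟨?_, ?_⟩
  · rintro ⟨-, m, j₁, j₂, hm, -, -, -, hr1, hr2, hinc⟩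
    obtain rfl := hm.unique hne
    by_cases e1 : T = j₁
    · rw [← e1, hrule] at hr1; cases hr1
    by_cases e2 : T = j₂
    · rw [← e2, hrule] at hr2; cases hr2
    have := hinc T (by omega) (by omega) e1 e2
    rw [hrule] at this; cases this
  · rw [N', dif_neg]
    rintro ⟨i', -, h2⟩
    rw [hne.N_eq, hP] at h2
    have := congrArg List.length h2
    simp [bump] at this

/-! ### The walk of the pair `(x, y)` -/

lemma padicValNat_two_pow_mul_odd (v w : ℕ) (hw : w % 2 = 1) : padicValNat 2 (2 ^ v * w) = v := by
  rw [padicValNat.mul (by positivity) (by rintro rfl; omega), padicValNat.prime_pow,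
    padicValNat.eq_zero_of_not_dvd (by omega), add_zero]

lemma padicValNat_two_pow_add {l y : ℕ} (h0 : 0 < y) (hy : y < 2 ^ l) :
    padicValNat 2 (2 ^ l + y) = padicValNat 2 y := by
  obtain ⟨w, hw, ho⟩ := exists_odd_mul h0
  set v := padicValNat 2 y
  have hv : v < l := by
    refine (Nat.pow_lt_pow_iff_right (a := 2) (by norm_num)).1 (lt_of_le_of_lt ?_ hy)
    rw [hw]; exact Nat.le_mul_of_pos_right _ (by omega)
  obtain ⟨c, rfl⟩ : ∃ c, l = v + (c + 1) := ⟨l - v - 1, by omega⟩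
  have : 2 ^ (v + (c + 1)) + y = 2 ^ v * (2 * 2 ^ c + w) := by
    conv_lhs => rw [hw]
    ring
  rw [this, padicValNat_two_pow_mul_odd _ _ (by omega)]

lemma padicValNat_two_pow_sub {l x : ℕ} (h0 : 0 < x) (hx : x < 2 ^ l) :
    padicValNat 2 (2 ^ l - x) = padicValNat 2 x := by
  obtain ⟨w, hw, ho⟩ := exists_odd_mul h0
  set v := padicValNat 2 x
  have hv : v < l := by
    refine (Nat.pow_lt_pow_iff_right (a := 2) (by norm_num)).1 (lt_of_le_of_lt ?_ hx)
    rw [hw]; exact Nat.le_mul_of_pos_right _ (by omega)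
  obtain ⟨c, rfl⟩ : ∃ c, l = v + (c + 1) := ⟨l - v - 1, by omega⟩
  have e : 2 ^ (v + (c + 1)) = 2 ^ v * (2 * 2 ^ c) := by ring
  have hlt : w < 2 * 2 ^ c := by
    rw [hw, e] at hx
    exact Nat.lt_of_mul_lt_mul_left hx
  have : 2 ^ (v + (c + 1)) - x = 2 ^ v * (2 * 2 ^ c - w) := by
    conv_lhs => rw [hw]
    rw [e, Nat.mul_sub]
  rw [this, padicValNat_two_pow_mul_odd _ _ (by omega)]

/-- The points `(x, y)` visited by the chain of `N'`, with the next index `i`. Write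
`m₀ = 0 < m₁ < m₂ < ⋯` for `0` followed by the numbers of odd `2`-adic valuation: the walk raises
`y` from `m_s` to `m_{s+1}` (first alternative, `x = m_s`), then `x` likewise (second
alternative, `y = m_{s+1}`). -/
def Walk (k x y i : ℕ) : Prop :=
  ((x = 0 ∨ Odd (padicValNat 2 x)) ∧ (x < y ∨ (x = 0 ∧ y = 0)) ∧
    (∀ z, x < z → z < y → ¬ Odd (padicValNat 2 z)) ∧ i = padicValNat 2 (2 ^ (2 * k) + y) + 1) ∨
  (Odd (padicValNat 2 y) ∧ 0 < x ∧ x ≤ y ∧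
    (∀ z, x ≤ z → z < y → ¬ Odd (padicValNat 2 z)) ∧ i = padicValNat 2 (2 ^ (2 * k) - x))

/-- `ν₂(2^{2k} + y)` and `ν₂(y)` have the same parity; for `y = 0` the right-hand side is the junk
value `0`, and the left-hand side is `2k`. -/
lemma odd_val_add {k y : ℕ} (hy : y < 2 ^ (2 * k)) :
    padicValNat 2 (2 ^ (2 * k) + y) % 2 = padicValNat 2 y % 2 := by
  rcases Nat.eq_zero_or_pos y with rfl | h0
  · rw [add_zero, padicValNat.prime_pow]; simp
  · rw [padicValNat_two_pow_add h0 hy]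

/-- The walk turns at numbers of odd valuation; this is the last one below `2^{2k}`. -/
lemma odd_val_last {k : ℕ} (hk : 1 ≤ k) : Odd (padicValNat 2 (2 ^ (2 * k) - 2)) := by
  have h4 : 4 ≤ 2 ^ (2 * k) := by
    calc 4 = 2 ^ 2 := by norm_num
      _ ≤ 2 ^ (2 * k) := Nat.pow_le_pow_right (by norm_num) (by omega)
  rw [padicValNat_two_pow_sub (by norm_num) (by omega)]
  simp

namespace Walk
variable {k x y i : ℕ}

lemma le (H : Walk k x y i) : x ≤ y := by
  rcases H with ⟨-, h, -⟩ | ⟨-, -, h, -⟩ <;> omega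

lemma index_le (H : Walk k x y i) (hy : y < 2 ^ (2 * k)) : i ≤ 2 * k + 1 := by
  have key : ∀ z, 0 < z → z < 2 ^ (2 * k) → padicValNat 2 z ≤ 2 * k := by
    intro z h0 hz
    have : 2 ^ padicValNat 2 z ≤ z := Nat.le_of_dvd h0 pow_padicValNat_dvd
    exact ((Nat.pow_lt_pow_iff_right (a := 2) (by norm_num)).1 (lt_of_le_of_lt this hz)).le
  rcases H with ⟨-, -, -, rfl⟩ | ⟨-, h0, h1, -, rfl⟩
  · rcases Nat.eq_zero_or_pos y with rfl | h0
    · rw [add_zero, padicValNat.prime_pow]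
    · rw [padicValNat_two_pow_add h0 hy]
      exact Nat.succ_le_succ (key y h0 hy)
  · rw [padicValNat_two_pow_sub h0 (by omega)]
    exact (key x h0 (by omega)).trans (by omega)

/-- An odd index raises `y`. -/
lemma next_y (H : Walk k x y i) (hy : y < 2 ^ (2 * k)) (hi : i % 2 = 1) :
    Walk k x (y + 1) (padicValNat 2 (2 ^ (2 * k) + (y + 1)) + 1) := by
  left
  rcases H with ⟨hx, hxy, hz, rfl⟩ | ⟨hO, h0, hxy, hz, rfl⟩
  · refine ⟨hx, by omega, ?_, rfl⟩
    intro z h1 h2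
    rcases Nat.lt_succ_iff_lt_or_eq.1 h2 with h3 | rfl
    · exact hz z h1 h3
    · have := odd_val_add hy
      rw [Nat.odd_iff]; omega
  · rw [padicValNat_two_pow_sub h0 (by omega), ← Nat.odd_iff] at hi
    have hxy' : x = y := by
      by_contra hne
      exact hz x le_rfl (by omega) hi
    subst hxy'
    exact ⟨Or.inr hi, Or.inl (by omega), fun z h1 h2 => by omega, rfl⟩

/-- An even index raises `x`. -/
lemma next_x (H : Walk k x y i) (hy : y < 2 ^ (2 * k)) (hi : i % 2 = 0) :
    x < y ∧ Walk k (x + 1) y (padicValNat 2 (2 ^ (2 * k) - (x + 1))) := by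
  rcases H with ⟨hx, hxy, hz, rfl⟩ | ⟨hO, h0, hxy, hz, rfl⟩
  · have h1 := odd_val_add hy
    have hO : Odd (padicValNat 2 y) := by rw [Nat.odd_iff]; omega
    have hlt : x < y := by
      rcases hxy with h | ⟨-, rfl⟩
      · exact h
      · simp at hO
    exact ⟨hlt, Or.inr ⟨hO, by omega, hlt, fun z h2 h3 => hz z (by omega) h3, rfl⟩⟩
  · have hlt : x < y := by
      refine lt_of_le_of_ne hxy ?_
      rintro rfl
      rw [padicValNat_two_pow_sub h0 hy] at hi
      rw [Nat.odd_iff] at hO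
      omega
    exact ⟨hlt, Or.inr ⟨hO, by omega, hlt, fun z h2 h3 => hz z (by omega) h3, rfl⟩⟩

/-- Away from the end of the walk, both coordinates are below `2^{2k}`. -/
lemma lt (H : Walk k x y i) (hk : 1 ≤ k) (hx : x < 2 ^ (2 * k))
    (h : x + y < 2 * 2 ^ (2 * k) - 2) : y < 2 ^ (2 * k) := by
  by_contra hy
  have hM := odd_val_last hk
  rcases H with ⟨-, -, hz, -⟩ | ⟨-, -, -, hz, -⟩
  · exact hz _ (by omega) (by omega) hM
  · exact hz _ (by omega) (by omega) hM

/-- The walk ends at `(2^{2k} - 2, 2^{2k})`; the other candidate `(2^{2k} - 1, 2^{2k} - 1)` is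
excluded, since `2^{2k} - 1` has valuation `0`. -/
lemma last (H : Walk k x y i) (hk : 1 ≤ k) (hx : x < 2 ^ (2 * k))
    (h : x + y = 2 * 2 ^ (2 * k) - 2) : x = 2 ^ (2 * k) - 2 ∧ y = 2 ^ (2 * k) := by
  have h4 : 4 ≤ 2 ^ (2 * k) := by
    calc 4 = 2 ^ 2 := by norm_num
      _ ≤ 2 ^ (2 * k) := Nat.pow_le_pow_right (by norm_num) (by omega)
  have hM := odd_val_last hk
  have hev : 2 ^ (2 * k) % 2 = 0 := by
    obtain ⟨c, rfl⟩ : ∃ c, k = c + 1 := ⟨k - 1, by omega⟩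
    rw [show 2 * (c + 1) = 2 * c + 1 + 1 by ring, pow_succ]; omega
  have hB : ¬ Odd (padicValNat 2 (2 ^ (2 * k) - 1)) := by
    rw [padicValNat.eq_zero_of_not_dvd (by omega)]; decide
  have hle := H.le
  by_cases h1 : y = 2 ^ (2 * k) - 1
  · obtain rfl : x = y := by omega
    rcases H with ⟨h5, h6, -⟩ | ⟨hO, -⟩
    · omega
    · rw [h1] at hO; exact absurd hO hB
  · by_cases h2 : y = 2 ^ (2 * k)
    · omega
    · exfalso
      rcases H with ⟨-, -, hz, -⟩ | ⟨-, -, -, hz, -⟩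
      · exact hz _ (by omega) (by omega) hM
      · exact hz _ (by omega) (by omega) hM

/-- On the diagonal at a number of odd valuation, the next step raises `y`. -/
lemma diag {m : ℕ} (H : Walk k x y i) (he : x + y = 2 * m) (h0 : 0 < m)
    (hm : m < 2 ^ (2 * k)) (hO : Odd (padicValNat 2 m)) : x = m ∧ y = m ∧ i % 2 = 1 := by
  have hle := H.le
  by_cases hx : x = m
  · have hy : y = m := by omega
    subst hx hy
    refine ⟨rfl, rfl, ?_⟩
    rcases H with ⟨-, h1, -⟩ | ⟨-, -, -, -, rfl⟩
    · omega
    · rw [padicValNat_two_pow_sub h0 hm]; exact Nat.odd_iff.1 hO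
  · exfalso
    rcases H with ⟨-, -, hz, -⟩ | ⟨-, -, -, hz, -⟩
    · exact hz m (by omega) (by omega) hO
    · exact hz m (by omega) (by omega) hO

end Walk

/-! ### The orbit of `S_k` under `N'` -/

/-- The entries of `S_k`. -/
def a₀ (k : ℕ) (j : ℕ) : ℤ := if j = 0 then 0 else if j ≤ 2 * k then 2 ^ (2 * k + 1 - j) else 0

lemma Sk_eq (k : ℕ) : Sk k = st (2 * k + 2) (a₀ k) := by
  apply eq_st
  · simp [Sk]
  · intro j hj
    rcases j with _ | j
    · simp [Sk, a₀]
    · unfold Sk a₀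
      rw [List.getD_cons_succ]
      by_cases h : j < 2 * k
      · rw [List.getD_append _ _ _ _ (by simpa using h), if_neg (by omega), if_pos (by omega)]
        rw [List.getD_eq_getElem _ _ (by simpa using h)]
        simp only [List.getElem_map, List.getElem_range]
        congr 1; omega
      · rw [List.getD_append_right _ _ _ _ (by simpa using h), if_neg (by omega),
          if_neg (by omega)]
        obtain rfl : j = 2 * k := by omega
        simp

lemma nearest_big {l j : ℕ} (h : l < j) : nearest j (2 ^ l - 1) = 0 := by
  unfold nearest
  apply Nat.div_eq_of_lt
  have : 2 ^ (l + 1) ≤ 2 ^ j := Nat.pow_le_pow_right (by norm_num) (by omega)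
  rw [pow_succ] at this ⊢
  have : 0 < 2 ^ l := by positivity
  omega

lemma W_init {k : ℕ} (hk : 1 ≤ k) : W k 0 0 (2 * k + 1) (a₀ k) where
  k_pos := hk
  ev j := by
    unfold a₀
    split_ifs
    · exact Even.zero
    · exact (Int.even_pow).2 ⟨even_two, by omega⟩
    · exact Even.zero
  out j hj := by rw [a₀, if_neg (by omega), if_neg (by omega)]
  a0 := by simp [a₀]
  a1 := by rw [a₀, if_neg (by omega), if_pos (by omega)]; simp
  hx := by positivity
  pos1 := by rw [a₀, if_neg (by omega), if_neg (by omega)]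
  pos2 := by rw [a₀, if_neg (by omega), if_pos le_rfl]; positivity
  rel j hj := by
    simp only [c3, Nat.sub_zero, add_zero]
    have n1 : (j + 1 ≤ 2 * k → (nearest (j + 1) (2 ^ (2 * k) - 1) : ℤ) = 2 ^ (2 * k - (j + 1))) :=
      nearest_top' _ _ (by omega)
    have n2 : (2 * k < j + 1 → (nearest (j + 1) (2 ^ (2 * k) - 1) : ℤ) = 0) :=
      fun h => by rw [nearest_big h]; rfl
    have n3 : (j < 2 * k → (nearest j (2 ^ (2 * k)) : ℤ) = 2 ^ (2 * k - j)) := by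
      intro h
      have := nearest_mul_of_lt (w := 1) h
      rw [mul_one, mul_one] at this
      rw [this]; push_cast; rfl
    have n4 : (nearest (2 * k) (2 ^ (2 * k)) : ℤ) = 1 := by
      have := nearest_mul_self (v := 2 * k) (w := 1)
      rw [mul_one] at this
      rw [this]; rfl
    have n5 : (nearest (2 * k + 1) (2 ^ (2 * k)) : ℤ) = 1 := by
      unfold nearest
      have e : 2 * 2 ^ (2 * k) + 2 ^ (2 * k + 1) = 2 ^ (2 * k + 1 + 1) := by ring
      rw [e, Nat.div_self (by positivity)]; rfl
    unfold a₀ zc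
    have hcases : j = 0 ∨ (0 < j ∧ j + 2 ≤ 2 * k) ∨ j + 1 = 2 * k ∨ j = 2 * k ∨ j = 2 * k + 1 := by
      omega
    rcases hcases with rfl | ⟨h0, h1⟩ | h1 | rfl | rfl
    · rw [n1 (by omega)]
      obtain ⟨c, rfl⟩ : ∃ c, k = c + 1 := ⟨k - 1, by omega⟩
      rw [if_neg (by omega), if_pos (by omega), if_pos (by omega), if_pos rfl, if_pos rfl,
        if_neg (by omega), show 2 * (c + 1) + 1 - (0 + 2) = 2 * c + 1 by omega,
        show 2 * (c + 1) - (0 + 1) = 2 * c + 1 by omega]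
      ring
    · rw [n1 (by omega), n3 (by omega), if_neg (by omega), if_pos (by omega), if_pos (by omega),
        if_neg (by omega), if_neg (by omega), if_pos (by omega), if_neg (by omega)]
      obtain ⟨c, hc⟩ : ∃ c, 2 * k = j + 2 + c := ⟨2 * k - j - 2, by omega⟩
      rw [hc, show j + 2 + c + 1 - (j + 2) = c + 1 by omega,
        show j + 2 + c - (j + 1) = c + 1 by omega, show j + 2 + c - j = c + 2 by omega,
        show j + 2 + c + 1 - j = c + 3 by omega]
      ring
    · rw [n1 (by omega), n3 (by omega), if_neg (by omega), if_neg (by omega), if_neg (by omega),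
        if_pos (by omega), if_neg (by omega), if_neg (by omega), if_pos (by omega),
        if_neg (by omega), show 2 * k - (j + 1) = 0 by omega, show 2 * k - j = 1 by omega,
        show 2 * k + 1 - j = 2 by omega]
      norm_num
    · rw [n2 (by omega), n4, if_neg (by omega), if_neg (by omega), if_neg (by omega),
        if_neg (by omega), if_neg (by omega), if_neg (by omega), if_pos (by omega),
        if_neg (by omega), show 2 * k + 1 - 2 * k = 1 by omega]
      norm_num
    · rw [n2 (by omega), n5, if_neg (by omega), if_neg (by omega), if_neg (by omega),
        if_neg (by omega), if_neg (by omega), if_neg (by omega), if_neg (by omega),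
        if_pos rfl]
      norm_num

/-- After `e` steps of `N'` the walk is at a point with `x + y = e`. -/
lemma orbit {k : ℕ} (hk : 1 ≤ k) (e : ℕ) (he : e ≤ 2 * 2 ^ (2 * k) - 2) :
    ∃ x y i a, x + y = e ∧ Walk k x y i ∧ W k x y i a ∧ N'^[e] (Sk k) = st (2 * k + 2) a := by
  induction e with
  | zero =>
    refine ⟨0, 0, 2 * k + 1, a₀ k, rfl, Or.inl ⟨Or.inl rfl, Or.inr ⟨rfl, rfl⟩, ?_, ?_⟩,
      W_init hk, Sk_eq k⟩
    · intro z h1 h2; omega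
    · rw [add_zero, padicValNat.prime_pow]
  | succ e ih =>
    obtain ⟨x, y, i, a, hxy, hw, hW, hN⟩ := ih (by omega)
    have hy := hw.lt hk hW.hx (by omega)
    rw [Function.iterate_succ_apply', hN]
    rcases Nat.mod_two_eq_zero_or_one i with hi | hi
    · obtain ⟨hlt, hw'⟩ := hw.next_x hy hi
      obtain ⟨-, a', h1, h2⟩ := hW.step_x hy (hw.index_le hy) hi (by omega)
      exact ⟨_, _, _, a', by omega, hw', h2, h1⟩
    · obtain ⟨b, -, -, -, a', h1, h2⟩ := hW.step_y hy (hw.index_le hy) hi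
      exact ⟨_, _, _, a', by omega, hw.next_y hy hi, h2, h1⟩

lemma orbit_reaches {k : ℕ} (hk : 1 ≤ k) {e e' : ℕ} (hee : e ≤ e')
    (he : e' ≤ 2 * 2 ^ (2 * k) - 2) : Reaches (N'^[e] (Sk k)) (N'^[e'] (Sk k)) := by
  induction e', hee using Nat.le_induction with
  | base => exact Reaches.refl _
  | succ e' _ ih =>
    refine (ih (by omega)).trans ?_
    obtain ⟨x, y, i, a, hxy, hw, hW, hN⟩ := orbit hk e' (by omega)
    have hy := hw.lt hk hW.hx (by omega)
    rw [Function.iterate_succ_apply', hN]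
    rcases Nat.mod_two_eq_zero_or_one i with hi | hi
    · obtain ⟨hlt, -⟩ := hw.next_x hy hi
      exact (hW.step_x hy (hw.index_le hy) hi (by omega)).1
    · obtain ⟨b, -, -, h, -⟩ := hW.step_y hy (hw.index_le hy) hi
      exact h

/-- From the end of the walk on, `N'` takes its junk value, so the iterates are constant and not
embanked. Hence every rooted embanked state occurs before. -/
lemma not_embanked_of_le {k : ℕ} (hk : 1 ≤ k) {e : ℕ} (he : 2 * 2 ^ (2 * k) - 2 ≤ e) :
    ¬ Embanked (N'^[e] (Sk k)) := by
  obtain ⟨x, y, i, a, hxy, hw, hW, hN⟩ := orbit hk _ le_rfl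
  obtain ⟨rfl, rfl⟩ := hw.last hk hW.hx hxy
  have key : N'^[e] (Sk k) = st (2 * k + 2) a := by
    induction e, he using Nat.le_induction with
    | base => exact hN
    | succ e _ ih => rw [Function.iterate_succ_apply', ih, hW.last.2]
  rw [key]
  exact hW.last.1

/-- A `1`-rooted embanked state `E` is determined by `m`: the pair `h` of its predecessor gives
`(x, y) = (m, m + 1)` for `E`, and `x + y` is the number of steps of `N'` from `S_k`. -/
lemma identify {k m : ℕ} (hk : 1 ≤ k) (hm : m ≤ 2 ^ (2 * k) - 2) {E F : State}
    (hRE : RootedEmbanked k E) (hF : IsEmptyState F) (hF1 : bump F 1 = E)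
    (hh₁ : hVal F 1 = 2 ^ (2 * k) - m - 1) (hh₂ : hVal F 2 = 2 ^ (2 * k) + m) :
    E = N'^[2 * m + 1] (Sk k) ∧ entry E 0 = 2 * m ∧ entry E 1 = 2 ^ (2 * k) + 2 * (m + 1) := by
  obtain ⟨hemb, e, rfl⟩ := hRE
  have he : e < 2 * 2 ^ (2 * k) - 2 := by
    by_contra h
    exact not_embanked_of_le hk (by omega) hemb
  obtain ⟨x, y, i, a, hxy, hw, hW, hN⟩ := orbit hk e he.le
  have hy := hw.lt hk hW.hx (by omega)
  have hx := hW.hx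
  rw [hN] at hF1
  have hFst := of_bump_st (by omega) hF1
  have Q : Pre k x (2 ^ (2 * k) + y - 1) (fun j => a j - if j = 1 then 2 else 0) := by
    refine ⟨hk, fun j => (hW.ev j).sub (by split_ifs <;> decide), ?_, ?_, ?_, hx, by omega, ?_⟩
    · intro j hj; rw [hW.out j hj, if_neg (by omega)]; rfl
    · rw [hW.a0, if_neg (by omega), sub_zero]
    · rw [hW.a1, if_pos rfl, Nat.cast_sub (by omega)]; push_cast; ring
    · rw [← hFst]; exact hF.2.2.2
  obtain ⟨h1, h2⟩ := Q.hVal_eq (by omega)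
  rw [← hFst] at h1 h2
  obtain rfl : x = m := by omega
  obtain rfl : y = x + 1 := by omega
  obtain rfl : e = 2 * x + 1 := by omega
  refine ⟨rfl, ?_, ?_⟩
  · rw [hN, entry_st (by omega), hW.a0]
  · rw [hN, entry_st (by omega), hW.a1]; push_cast; ring

/-- If `ν₂(m)` is odd, the walk visits `(m, m)` and leaves it by raising `y`, which gives the
`1`-rooted embanked state attached to `m`. -/
lemma exists_at {k m : ℕ} (hk : 1 ≤ k) (h0 : 0 < m) (hm : m ≤ 2 ^ (2 * k) - 2)
    (hO : Odd (padicValNat 2 m)) :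
    RootedEmbanked k (N'^[2 * m + 1] (Sk k)) ∧
      ∃ F, IsEmptyState F ∧ N F = N'^[2 * m + 1] (Sk k) ∧ bump F 1 = N'^[2 * m + 1] (Sk k) ∧
        hVal F 1 = 2 ^ (2 * k) - m - 1 ∧ hVal F 2 = 2 ^ (2 * k) + m := by
  obtain ⟨x, y, i, a, hxy, hw, hW, hN⟩ := orbit hk (2 * m) (by omega)
  obtain ⟨hxm, hym, hi⟩ := hw.diag hxy h0 (by omega) hO
  subst x y
  have hx := hW.hx
  obtain ⟨b, hb, hNb, -, a', h1, h2⟩ := hW.step_y hx (hw.index_le hx) hi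
  have e1 : N'^[2 * m + 1] (Sk k) = N' (st (2 * k + 2) a) := by
    rw [Function.iterate_succ_apply', hN]
  obtain ⟨v1, v2⟩ := hb.pre.hVal_eq (by omega)
  refine ⟨⟨?_, _, rfl⟩, st (2 * k + 2) b, hb.pre.isEmpty, ?_, ?_, by omega, v2⟩
  · rw [e1, h1]; exact h2.embanked (by omega)
  · rw [e1, hNb]
  · rw [e1, hNb, hb.N_eq_bump hx (by omega)]

/-! ### The theorem -/

/-- Let `E` be a `1`-rooted embanked state (with empty predecessor `F`) such
that there is `m ∈ [0, 2^{2k} - 2)` with `ν₂(m)` odd and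
`h(N⁻¹(E)) = (2^{2k} - m - 1, 2^{2k} + m)`.  Let `m'` be the smallest element of
`[0, 2^{2k} - 2]` with `m' > m` and `ν₂(m')` odd, and set `d = m' - m`.  Then there is a
unique `1`-rooted embanked state `E'` with `E ↦ E'` and
`h(N⁻¹(E')) = (2^{2k} - m' - 1, 2^{2k} + m')`; moreover `a_i(E') = a_i(E) + 2d` for
`i ∈ {0, 1}`. -/
theorem statement_11 (k : ℕ) (E F : State) (m m' : ℕ)
    (hRE : RootedEmbanked k E)
    (hF : IsEmptyState F) (hNF : N F = E) (hF1 : bump F 1 = E)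
    (hm : m < 2 ^ (2 * k) - 2) (hv : Odd (padicValNat 2 m))
    (hh₁ : hVal F 1 = 2 ^ (2 * k) - m - 1) (hh₂ : hVal F 2 = 2 ^ (2 * k) + m)
    (hm' : IsLeast {x : ℕ | m < x ∧ x ≤ 2 ^ (2 * k) - 2 ∧ Odd (padicValNat 2 x)} m') :
    (∃! E' : State, Reaches E E' ∧ RootedEmbanked k E' ∧
        ∃ F', IsEmptyState F' ∧ N F' = E' ∧ bump F' 1 = E' ∧
          hVal F' 1 = 2 ^ (2 * k) - m' - 1 ∧ hVal F' 2 = 2 ^ (2 * k) + m') ∧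
    (∀ E' : State, (Reaches E E' ∧ RootedEmbanked k E' ∧
        ∃ F', IsEmptyState F' ∧ N F' = E' ∧ bump F' 1 = E' ∧
          hVal F' 1 = 2 ^ (2 * k) - m' - 1 ∧ hVal F' 2 = 2 ^ (2 * k) + m') →
      entry E' 0 = entry E 0 + 2 * ((m' - m : ℕ) : ℤ) ∧
      entry E' 1 = entry E 1 + 2 * ((m' - m : ℕ) : ℤ)) := by
  have hk : 1 ≤ k := by
    by_contra h
    obtain rfl : k = 0 := by omega
    simp at hm
  -- `E` and `E'` are the iterates of `N'` on `S_k` of orders `2m + 1` and `2m' + 1`.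
  obtain ⟨⟨hmm, hle, hO⟩, -⟩ := hm'
  obtain ⟨hE, hE0, hE1⟩ := identify hk hm.le hRE hF hF1 hh₁ hh₂
  obtain ⟨hR', hF'⟩ := exists_at hk (by omega) hle hO
  refine ⟨⟨_, ⟨?_, hR', hF'⟩, ?_⟩, ?_⟩
  · rw [hE]
    exact orbit_reaches hk (by omega) (by omega)
  · rintro E'' ⟨-, hRE'', F'', g1, -, g2, g3, g4⟩
    exact (identify hk hle hRE'' g1 g2 g3 g4).1
  · rintro E'' ⟨-, hRE'', F'', g1, -, g2, g3, g4⟩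
    obtain ⟨-, k0, k1⟩ := identify hk hle hRE'' g1 g2 g3 g4
    rw [k0, k1, hE0, hE1, Nat.cast_sub hmm.le]
    constructor <;> ring

end Skelet17
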